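/- arXiv:1305.0353 — 4 statements merged into one kernel-verified Lean document; each statement's English description precedes it below -/
import Mathlib

section
/- If ψ is a non-constant function on V achieving the spectral gap, i.e. E_ν(ψ,ψ)/Var_π(ψ) = λ^G_{π,ν}, then ψ is monotonic: either ψ(i) ≤ ψ(i+1) for all 1 ≤ i < n, or ψ(i) ≥ ψ(i+1) for all 1 ≤ i < n. -/
open Finset

/-- Dirichlet form on the path with vertices `{1,…,n}`;
`ν i` denotes the weight of edge `{i, i+1}`. -/
noncomputable def EForm (n : ℕ) (ν : ℕ → ℝ) (f g : ℕ → ℝ) : ℝ :=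
  ∑ i ∈ Finset.Icc 1 (n - 1), (f i - f (i + 1)) * (g i - g (i + 1)) * ν i

/-- Mean of `f` with respect to `π` on `{1,…,n}`. -/
noncomputable def piMean (n : ℕ) (π : ℕ → ℝ) (f : ℕ → ℝ) : ℝ :=
  ∑ i ∈ Finset.Icc 1 n, f i * π i

/-- Variance of `f` with respect to `π` on `{1,…,n}`. -/
noncomputable def varPi (n : ℕ) (π : ℕ → ℝ) (f : ℕ → ℝ) : ℝ :=
  piMean n π (fun i => (f i) ^ 2) - (piMean n π f) ^ 2

/-- `f` is non-constant on `{1,…,n}`. -/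
def Nonconstant (n : ℕ) (f : ℕ → ℝ) : Prop :=
  ∃ i ∈ Finset.Icc 1 n, ∃ j ∈ Finset.Icc 1 n, f i ≠ f j

/-- `lam` is the spectral gap: the minimum of the Rayleigh quotients over
non-constant functions. -/
def IsSpectralGap (n : ℕ) (π ν : ℕ → ℝ) (lam : ℝ) : Prop :=
  IsLeast {r : ℝ | ∃ f : ℕ → ℝ, Nonconstant n f ∧ r = EForm n ν f f / varPi n π f} lam

lemma two_var (n : ℕ) (π f : ℕ → ℝ) (hπ1 : ∑ i ∈ Finset.Icc 1 n, π i = 1) :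
    ∑ i ∈ Finset.Icc 1 n, ∑ j ∈ Finset.Icc 1 n, (f i - f j) ^ 2 * (π i * π j)
      = 2 * varPi n π f := by
  have h : ∀ i j, (f i - f j) ^ 2 * (π i * π j)
      = (f i ^ 2 * π i) * π j + π i * (f j ^ 2 * π j) - 2 * ((f i * π i) * (f j * π j)) := by
    intro i j; ring
  simp only [h, Finset.sum_sub_distrib, Finset.sum_add_distrib, ← Finset.mul_sum,
    ← Finset.sum_mul, hπ1, varPi, piMean]
  ring

lemma double_lt (n : ℕ) (π : ℕ → ℝ) (hπ : ∀ i ∈ Finset.Icc 1 n, 0 < π i)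
    (F G : ℕ → ℕ → ℝ) (hle : ∀ i j, F i j ≤ G i j) (a b : ℕ)
    (ha : a ∈ Finset.Icc 1 n) (hb : b ∈ Finset.Icc 1 n) (hlt : F a b < G a b) :
    ∑ i ∈ Finset.Icc 1 n, ∑ j ∈ Finset.Icc 1 n, F i j * (π i * π j)
      < ∑ i ∈ Finset.Icc 1 n, ∑ j ∈ Finset.Icc 1 n, G i j * (π i * π j) := by
  have key : ∀ i ∈ Finset.Icc 1 n, ∀ j ∈ Finset.Icc 1 n,
      F i j * (π i * π j) ≤ G i j * (π i * π j) := fun i hi j hj =>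
    mul_le_mul_of_nonneg_right (hle i j) (mul_pos (hπ i hi) (hπ j hj)).le
  refine Finset.sum_lt_sum (fun i hi => Finset.sum_le_sum (key i hi)) ⟨a, ha, ?_⟩
  exact Finset.sum_lt_sum (key a ha)
    ⟨b, hb, mul_lt_mul_of_pos_right hlt (mul_pos (hπ a ha) (hπ b hb))⟩

theorem stmt0 (n : ℕ) (hn : 2 ≤ n) (π ν : ℕ → ℝ)
    (hπ : ∀ i ∈ Finset.Icc 1 n, 0 < π i)
    (hπ1 : ∑ i ∈ Finset.Icc 1 n, π i = 1)
    (hν : ∀ i ∈ Finset.Icc 1 (n - 1), 0 < ν i)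
    (hν0 : ν 0 = 0) (hνn : ν n = 0)
    (gap : ℝ) (hgap : IsSpectralGap n π ν gap)
    (ψ : ℕ → ℝ) (hψ : Nonconstant n ψ)
    (hmin : EForm n ν ψ ψ / varPi n π ψ = gap) :
    (∀ i, 1 ≤ i → i < n → ψ i ≤ ψ (i + 1)) ∨
    (∀ i, 1 ≤ i → i < n → ψ (i + 1) ≤ ψ i) := by
  by_contra hcon
  push Not at hcon
  obtain ⟨⟨a, ha1, han, ha⟩, ⟨b, hb1, hbn, hb⟩⟩ := hcon
  obtain ⟨φ, hφ⟩ : ∃ φ : ℕ → ℝ, ∀ i, φ (i + 1) = φ i + |ψ (i + 1) - ψ i| :=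
    ⟨fun i => ∑ k ∈ Finset.range i, |ψ (k + 1) - ψ k|, fun i => Finset.sum_range_succ _ _⟩
  have hg : Monotone (fun i => φ i - ψ i) := monotone_nat_of_le_succ fun i => by
    have := le_abs_self (ψ (i + 1) - ψ i)
    simp only [hφ]; linarith
  have hh : Monotone (fun i => φ i + ψ i) := monotone_nat_of_le_succ fun i => by
    have := neg_abs_le (ψ (i + 1) - ψ i)
    simp only [hφ]; linarith
  have hle : ∀ i j, (ψ i - ψ j) ^ 2 ≤ (φ i - φ j) ^ 2 := by
    intro i j
    rcases le_total i j with h | h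
    · have h1 := hg h
      have h2 := hh h
      simp only at h1 h2
      nlinarith [mul_nonneg (sub_nonneg.2 h1) (sub_nonneg.2 h2)]
    · have h1 := hg h
      have h2 := hh h
      simp only at h1 h2
      nlinarith [mul_nonneg (sub_nonneg.2 h1) (sub_nonneg.2 h2)]
  have hlt : (ψ 1 - ψ n) ^ 2 < (φ 1 - φ n) ^ 2 := by
    have h1 : φ 1 - ψ 1 < φ n - ψ n := by
      have e1 : φ 1 - ψ 1 ≤ φ a - ψ a := hg ha1
      have e2 : φ (a + 1) - ψ (a + 1) ≤ φ n - ψ n := hg han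
      have := abs_nonneg (ψ (a + 1) - ψ a)
      rw [hφ] at e2
      linarith
    have h2 : φ 1 + ψ 1 < φ n + ψ n := by
      have e1 : φ 1 + ψ 1 ≤ φ b + ψ b := hh hb1
      have e2 : φ (b + 1) + ψ (b + 1) ≤ φ n + ψ n := hh hbn
      have := abs_nonneg (ψ (b + 1) - ψ b)
      rw [hφ] at e2
      linarith
    nlinarith [mul_pos (sub_pos.2 h1) (sub_pos.2 h2)]
  have m1 : 1 ∈ Finset.Icc 1 n := Finset.mem_Icc.2 ⟨le_rfl, by omega⟩
  have mn : n ∈ Finset.Icc 1 n := Finset.mem_Icc.2 ⟨by omega, le_rfl⟩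
  have hE : EForm n ν φ φ = EForm n ν ψ ψ := by
    unfold EForm
    refine Finset.sum_congr rfl fun i _ => ?_
    have h1 := abs_mul_abs_self (ψ (i + 1) - ψ i)
    rw [hφ]
    linear_combination ν i * h1
  have hEpos : 0 < EForm n ν ψ ψ := by
    unfold EForm
    refine Finset.sum_pos' (fun i hi => mul_nonneg (mul_self_nonneg _) (hν i hi).le)
      ⟨a, Finset.mem_Icc.2 ⟨ha1, by omega⟩, ?_⟩
    exact mul_pos (mul_self_pos.2 (by linarith [ha] : 0 < ψ a - ψ (a + 1)).ne')
      (hν a (Finset.mem_Icc.2 ⟨ha1, by omega⟩))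
  have hV : varPi n π ψ < varPi n π φ := by
    have := double_lt n π hπ (fun i j => (ψ i - ψ j) ^ 2) (fun i j => (φ i - φ j) ^ 2)
      hle 1 n m1 mn hlt
    simp only [two_var n π _ hπ1] at this
    linarith
  have hVpos : 0 < varPi n π ψ := by
    obtain ⟨i, hi, j, hj, hij⟩ := hψ
    have := double_lt n π hπ (fun i j => 0) (fun i j => (ψ i - ψ j) ^ 2)
      (fun i j => sq_nonneg _) i j hi hj (by have := sub_ne_zero.2 hij; positivity)
    simp only [two_var n π _ hπ1, zero_mul, Finset.sum_const_zero] at this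
    linarith
  have hφn : Nonconstant n φ := ⟨1, m1, n, mn, fun h => by
    rw [h, sub_self] at hlt
    nlinarith [sq_nonneg (ψ 1 - ψ n)]⟩
  have := hgap.2 ⟨φ, hφn, rfl⟩
  rw [← hmin, hE] at this
  exact absurd this (not_le.2 (div_lt_div_of_pos_left hEpos hVpos hV))
end

section
/- There exists a constant σ ∈ (0,1), depending only on n, π and ν (in particular independent of the choice of λ_0 and a), such that 0 ≤ λ_k − λ^G_{π,ν} ≤ σ^{k−1} λ_1 for all k ≥ 1. -/
open Finset

/-- The positive-part recursion with parameter `lam`: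
`ψ(i+1) = ψ(i) + max{[ψ(i)−ψ(i−1)]ν(i−1,i) − λ π(i) ψ(i), 0}/ν(i,i+1)` for `1 ≤ i < n`. -/
def PosPartRec (n : ℕ) (π ν : ℕ → ℝ) (lam : ℝ) (ψ : ℕ → ℝ) : Prop :=
  ∀ i, 1 ≤ i → i < n →
    ψ (i + 1) = ψ i + max ((ψ i - ψ (i - 1)) * ν (i - 1) - lam * (π i * ψ i)) 0 / ν i


/-- Weighted double-sum identity for the covariance. -/
lemma cov_double (s : Finset ℕ) (p f g : ℕ → ℝ) (hp : ∑ i ∈ s, p i = 1) :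
    ∑ i ∈ s, ∑ j ∈ s, p i * p j * ((f i - f j) * (g i - g j)) =
      2 * (∑ i ∈ s, p i * (f i * g i) - (∑ i ∈ s, p i * f i) * (∑ i ∈ s, p i * g i)) := by
  have h1 : ∀ i ∈ s, ∑ j ∈ s, p i * p j * ((f i - f j) * (g i - g j)) =
      p i * (f i * g i) - (p i * f i) * (∑ j ∈ s, p j * g j)
        - (p i * g i) * (∑ j ∈ s, p j * f j) + p i * (∑ j ∈ s, p j * (f j * g j)) := by
    intro i _
    have : p i * (f i * g i) = p i * (f i * g i) * ∑ j ∈ s, p j := by rw [hp, mul_one]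
    rw [this, Finset.mul_sum, Finset.mul_sum, Finset.mul_sum, Finset.mul_sum,
      ← Finset.sum_sub_distrib, ← Finset.sum_sub_distrib, ← Finset.sum_add_distrib]
    refine Finset.sum_congr rfl fun j _ => ?_
    ring
  rw [Finset.sum_congr rfl h1, Finset.sum_add_distrib, Finset.sum_sub_distrib,
    Finset.sum_sub_distrib, ← Finset.sum_mul, ← Finset.sum_mul, ← Finset.sum_mul, hp]
  ring

lemma var_double (n : ℕ) (p f : ℕ → ℝ) (hp : ∑ i ∈ Finset.Icc 1 n, p i = 1) :
    ∑ i ∈ Finset.Icc 1 n, ∑ j ∈ Finset.Icc 1 n, p i * p j * ((f i - f j) * (f i - f j)) =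
      2 * varPi n p f := by
  rw [cov_double _ p f f hp, varPi, piMean, piMean]
  have h1 : ∀ i ∈ Finset.Icc 1 n, p i * (f i * f i) = f i ^ 2 * p i := fun i _ => by ring
  have h2 : ∀ i ∈ Finset.Icc 1 n, p i * f i = f i * p i := fun i _ => by ring
  rw [Finset.sum_congr rfl h1, Finset.sum_congr rfl h2]
  ring

/-- A single pair bounds the double sum from below. -/
lemma double_ge (s : Finset ℕ) (F : ℕ → ℕ → ℝ) (h : ∀ i ∈ s, ∀ j ∈ s, 0 ≤ F i j)
    (i j : ℕ) (hi : i ∈ s) (hj : j ∈ s) : F i j ≤ ∑ i ∈ s, ∑ j ∈ s, F i j :=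
  (Finset.single_le_sum (f := fun j => F i j) (fun j hj => h i hi j hj) hj).trans
    (Finset.single_le_sum (f := fun i => ∑ j ∈ s, F i j)
      (fun i hi => Finset.sum_nonneg (h i hi)) hi)

lemma var_pos (n : ℕ) (p f : ℕ → ℝ) (hp0 : ∀ i ∈ Finset.Icc 1 n, 0 < p i)
    (hp : ∑ i ∈ Finset.Icc 1 n, p i = 1) (hf : Nonconstant n f) : 0 < varPi n p f := by
  obtain ⟨i, hi, j, hj, hij⟩ := hf
  have h := double_ge (Finset.Icc 1 n) (fun i j => p i * p j * ((f i - f j) * (f i - f j)))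
    (fun i hi j hj => mul_nonneg (mul_pos (hp0 i hi) (hp0 j hj)).le (mul_self_nonneg _)) i j hi hj
  rw [var_double n p f hp] at h
  have : 0 < p i * p j * ((f i - f j) * (f i - f j)) :=
    mul_pos (mul_pos (hp0 i hi) (hp0 j hj)) (mul_self_pos.2 (sub_ne_zero.2 hij))
  linarith

lemma var_const (n : ℕ) (p f : ℕ → ℝ)
    (hp : ∑ i ∈ Finset.Icc 1 n, p i = 1) (hf : ¬ Nonconstant n f) : varPi n p f = 0 := by
  have h := var_double n p f hp
  rw [Finset.sum_eq_zero] at h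
  · linarith
  · intro i hi
    refine Finset.sum_eq_zero fun j hj => ?_
    have : f i = f j := by
      by_contra hne
      exact hf ⟨i, hi, j, hj, hne⟩
    rw [this]; ring

lemma EForm_nonneg (n : ℕ) (ν f : ℕ → ℝ) (hν : ∀ i ∈ Finset.Icc 1 (n - 1), 0 < ν i) :
    0 ≤ EForm n ν f f :=
  Finset.sum_nonneg fun i hi => mul_nonneg (mul_self_nonneg _) (hν i hi).le

/-- Poincare inequality. -/
lemma poincare (n : ℕ) (p ν : ℕ → ℝ) (hp0 : ∀ i ∈ Finset.Icc 1 n, 0 < p i)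
    (hp : ∑ i ∈ Finset.Icc 1 n, p i = 1) (hν : ∀ i ∈ Finset.Icc 1 (n - 1), 0 < ν i)
    (gap : ℝ) (hgap : IsSpectralGap n p ν gap) (f : ℕ → ℝ) :
    0 ≤ EForm n ν f f - gap * varPi n p f := by
  by_cases hf : Nonconstant n f
  · have h := hgap.2 ⟨f, hf, rfl⟩
    rw [le_div_iff₀ (var_pos n p f hp0 hp hf)] at h
    linarith
  · rw [var_const n p f hp hf]
    have := EForm_nonneg n ν f hν
    linarith

/-- The monotone function with the same absolute increments. -/
noncomputable def monoRe (f : ℕ → ℝ) (i : ℕ) : ℝ := ∑ l ∈ Finset.range i, |f (l + 1) - f l|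

lemma monoRe_succ (f : ℕ → ℝ) (i : ℕ) : monoRe f (i + 1) = monoRe f i + |f (i + 1) - f i| := by
  rw [monoRe, Finset.sum_range_succ, ← monoRe]

lemma monoRe_le (f : ℕ → ℝ) (i k : ℕ) : |f (i + k) - f i| ≤ monoRe f (i + k) - monoRe f i := by
  induction k with
  | zero => simp
  | succ k ih =>
    rw [← add_assoc, monoRe_succ]
    have := abs_sub_le (f (i + k + 1)) (f (i + k)) (f i)
    linarith

lemma monoRe_mono (f : ℕ → ℝ) : Monotone (monoRe f) :=
  monotone_nat_of_le_succ fun i => by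
    rw [monoRe_succ]; linarith [abs_nonneg (f (i + 1) - f i)]

lemma monoRe_abs (f : ℕ → ℝ) (i j : ℕ) : |f i - f j| ≤ |monoRe f i - monoRe f j| := by
  rcases le_total i j with h | h
  · obtain ⟨k, rfl⟩ := Nat.exists_eq_add_of_le h
    rw [abs_sub_comm, abs_sub_comm (monoRe f i)]
    exact (monoRe_le f i k).trans (le_abs_self _)
  · obtain ⟨k, rfl⟩ := Nat.exists_eq_add_of_le h
    exact (monoRe_le f j k).trans (le_abs_self _)

/-- The covariance written with weights first. -/
noncomputable def covv (n : ℕ) (p f g : ℕ → ℝ) : ℝ :=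
  ∑ i ∈ Finset.Icc 1 n, p i * (f i * g i)
    - (∑ i ∈ Finset.Icc 1 n, p i * f i) * (∑ i ∈ Finset.Icc 1 n, p i * g i)

lemma var_eq_covv (n : ℕ) (p f : ℕ → ℝ) (hp : ∑ i ∈ Finset.Icc 1 n, p i = 1) :
    varPi n p f = covv n p f f := by
  have h1 := var_double n p f hp
  have h2 := cov_double (Finset.Icc 1 n) p f f hp
  rw [covv]; linarith

lemma covv_expand (n : ℕ) (p f g : ℕ → ℝ) (t : ℝ) :
    covv n p (fun i => f i + t * g i) (fun i => f i + t * g i) =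
      covv n p f f + 2 * t * covv n p g f + t ^ 2 * covv n p g g := by
  have h1 : ∑ i ∈ Finset.Icc 1 n, p i * ((f i + t * g i) * (f i + t * g i)) =
      ∑ i ∈ Finset.Icc 1 n, p i * (f i * f i) + 2 * t * ∑ i ∈ Finset.Icc 1 n, p i * (g i * f i)
        + t ^ 2 * ∑ i ∈ Finset.Icc 1 n, p i * (g i * g i) := by
    rw [Finset.mul_sum, Finset.mul_sum, ← Finset.sum_add_distrib, ← Finset.sum_add_distrib]
    exact Finset.sum_congr rfl fun i _ => by ring
  have h2 : ∑ i ∈ Finset.Icc 1 n, p i * (f i + t * g i) =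
      ∑ i ∈ Finset.Icc 1 n, p i * f i + t * ∑ i ∈ Finset.Icc 1 n, p i * g i := by
    rw [Finset.mul_sum, ← Finset.sum_add_distrib]
    exact Finset.sum_congr rfl fun i _ => by ring
  simp only [covv]
  rw [h1, h2]
  ring

lemma EForm_expand (n : ℕ) (ν f g : ℕ → ℝ) (t : ℝ) :
    EForm n ν (fun i => f i + t * g i) (fun i => f i + t * g i) =
      EForm n ν f f + 2 * t * EForm n ν g f + t ^ 2 * EForm n ν g g := by
  simp only [EForm]
  rw [Finset.mul_sum, Finset.mul_sum, ← Finset.sum_add_distrib, ← Finset.sum_add_distrib]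
  exact Finset.sum_congr rfl fun i _ => by ring

/-- Existence of a monotone minimizer, with its Euler-Lagrange equation. -/
lemma exists_eigen (n : ℕ) (hn : 2 ≤ n) (p ν : ℕ → ℝ) (hp0 : ∀ i ∈ Finset.Icc 1 n, 0 < p i)
    (hp : ∑ i ∈ Finset.Icc 1 n, p i = 1) (hν : ∀ i ∈ Finset.Icc 1 (n - 1), 0 < ν i)
    (gap : ℝ) (hgap : IsSpectralGap n p ν gap) :
    ∃ φ : ℕ → ℝ, Monotone φ ∧ ∑ i ∈ Finset.Icc 1 n, p i * φ i = 0 ∧ 0 < φ n ∧ φ 1 ≤ 0 ∧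
      ∀ g, EForm n ν g φ = gap * ∑ i ∈ Finset.Icc 1 n, p i * (g i * φ i) := by
  have hpc := poincare n p ν hp0 hp hν gap hgap
  obtain ⟨f, hf, hfe⟩ := hgap.1
  have hvf := var_pos n p f hp0 hp hf
  have hgap0 : 0 ≤ gap := by
    rw [hfe]; exact div_nonneg (EForm_nonneg n ν f hν) hvf.le
  rw [eq_div_iff hvf.ne'] at hfe
  set h := monoRe f with hh
  set c := ∑ i ∈ Finset.Icc 1 n, p i * h i with hc
  set φ : ℕ → ℝ := fun i => h i - c with hφ
  have hmono : Monotone φ := fun i j hij => sub_le_sub_right (monoRe_mono f hij) c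
  have hmean : ∑ i ∈ Finset.Icc 1 n, p i * φ i = 0 := by
    simp only [hφ, mul_sub, Finset.sum_sub_distrib, ← Finset.sum_mul, hp]
    rw [← hc]; ring
  have hE : EForm n ν φ φ = EForm n ν f f := by
    refine Finset.sum_congr rfl fun i _ => ?_
    simp only [hφ, hh, monoRe_succ]
    have := abs_mul_abs_self (f (i + 1) - f i)
    linear_combination ν i * this
  have hV : varPi n p f ≤ varPi n p φ := by
    have h1 := var_double n p f hp
    have h2 := var_double n p φ hp
    have : ∑ i ∈ Finset.Icc 1 n, ∑ j ∈ Finset.Icc 1 n, p i * p j * ((f i - f j) * (f i - f j)) ≤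
        ∑ i ∈ Finset.Icc 1 n, ∑ j ∈ Finset.Icc 1 n, p i * p j * ((φ i - φ j) * (φ i - φ j)) := by
      refine Finset.sum_le_sum fun i hi => Finset.sum_le_sum fun j hj => ?_
      refine mul_le_mul_of_nonneg_left ?_ (mul_pos (hp0 i hi) (hp0 j hj)).le
      have h3 : φ i - φ j = monoRe f i - monoRe f j := by simp only [hφ, hh]; ring
      rw [h3, ← abs_mul_abs_self, ← abs_mul_abs_self (monoRe f i - monoRe f j)]
      exact mul_self_le_mul_self (abs_nonneg _) (monoRe_abs f i j)
    linarith
  have hq0 : EForm n ν φ φ - gap * varPi n p φ = 0 := by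
    have h1 := hpc φ
    have h2 := mul_le_mul_of_nonneg_left hV hgap0
    rw [hE] at h1 ⊢
    linarith
  have hn1 : 1 ∈ Finset.Icc 1 n := Finset.mem_Icc.2 ⟨le_rfl, by omega⟩
  have hnn : n ∈ Finset.Icc 1 n := Finset.mem_Icc.2 ⟨by omega, le_rfl⟩
  have hlt : φ 1 < φ n := by
    by_contra hcon
    push Not at hcon
    have hnc : ¬ Nonconstant n φ := by
      rintro ⟨i, hi, j, hj, hij⟩
      rw [Finset.mem_Icc] at hi hj
      apply hij
      have := hmono hi.1
      have := hmono hi.2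
      have := hmono hj.1
      have := hmono hj.2
      linarith
    have := var_const n p φ hp hnc
    linarith
  have hφn : 0 < φ n := by
    by_contra hcon
    push Not at hcon
    have h1 : ∑ i ∈ Finset.Icc 1 n, p i * φ i < ∑ i ∈ Finset.Icc 1 n, (0 : ℝ) := by
      refine Finset.sum_lt_sum (fun i hi => ?_) ⟨1, hn1, ?_⟩
      · exact mul_nonpos_of_nonneg_of_nonpos (hp0 i hi).le
          ((hmono (Finset.mem_Icc.1 hi).2).trans hcon)
      · exact mul_neg_of_pos_of_neg (hp0 1 hn1) (by linarith)
    simp [hmean] at h1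
  have hφ1 : φ 1 ≤ 0 := by
    by_contra hcon
    push Not at hcon
    have h1 : 0 < ∑ i ∈ Finset.Icc 1 n, p i * φ i :=
      Finset.sum_pos (fun i hi => mul_pos (hp0 i hi)
        (hcon.trans_le (hmono (Finset.mem_Icc.1 hi).1))) ⟨1, hn1⟩
    linarith
  refine ⟨φ, hmono, hmean, hφn, hφ1, fun g => ?_⟩
  have hcov : covv n p g φ = ∑ i ∈ Finset.Icc 1 n, p i * (g i * φ i) := by
    rw [covv, hmean]; ring
  rw [← hcov]
  have key : ∀ t : ℝ, 0 ≤ 2 * t * (EForm n ν g φ - gap * covv n p g φ) +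
      t ^ 2 * (EForm n ν g g - gap * covv n p g g) := by
    intro t
    have h1 := hpc (fun i => φ i + t * g i)
    rw [var_eq_covv n p _ hp] at h1 hq0
    rw [covv_expand, EForm_expand] at h1
    linarith
  have hA := hpc g
  rw [var_eq_covv n p _ hp] at hA
  set A := EForm n ν g g - gap * covv n p g g
  set B := EForm n ν g φ - gap * covv n p g φ with hB
  have hB0 : B = 0 := by
    have h1 := key (-B / (A + 1))
    have hA1 : 0 < A + 1 := by linarith
    have h2 : 2 * (-B / (A + 1)) * B + (-B / (A + 1)) ^ 2 * A =
        -(B ^ 2 * (A + 2)) / (A + 1) ^ 2 := by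
      field_simp
      ring
    rw [h2] at h1
    have h3 : 0 ≤ -(B ^ 2 * (A + 2)) := by
      by_contra hcon
      push Not at hcon
      exact absurd h1 (not_le.2 (div_neg_of_neg_of_pos hcon (by positivity)))
    have h4 : B ^ 2 ≤ 0 := by nlinarith [sq_nonneg B]
    exact pow_eq_zero_iff (two_ne_zero) |>.1 (le_antisymm h4 (sq_nonneg B))
  linarith

/-- Summation by parts. -/
lemma abel_aux (p ψ D g : ℕ → ℝ) (lam : ℝ) (k : ℕ)
    (h : ∀ i, 1 ≤ i → i ≤ k →
      (D i + lam * ∑ l ∈ Finset.Icc 1 i, p l * ψ l) * (g (i + 1) - g i) = 0) :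
    ∑ i ∈ Finset.Icc 1 k, D i * (g (i + 1) - g i) =
      lam * ∑ i ∈ Finset.Icc 1 k, p i * ψ i * (g i - g (k + 1)) := by
  induction k with
  | zero => simp
  | succ k ih =>
    have h1 := h (k + 1) (by omega) le_rfl
    rw [Finset.sum_Icc_succ_top (by omega), ih (fun i a b => h i a (by omega))]
    have h2 : ∑ i ∈ Finset.Icc 1 (k + 1), p i * ψ i * (g i - g (k + 1 + 1)) =
        ∑ i ∈ Finset.Icc 1 k, p i * ψ i * (g i - g (k + 1)) +
        (∑ i ∈ Finset.Icc 1 (k + 1), p i * ψ i) * (g (k + 1) - g (k + 1 + 1)) := by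
      have : ∑ i ∈ Finset.Icc 1 k, p i * ψ i * (g i - g (k + 1)) =
          ∑ i ∈ Finset.Icc 1 (k + 1), p i * ψ i * (g i - g (k + 1)) := by
        rw [Finset.sum_Icc_succ_top (by omega)]; ring
      rw [this, Finset.sum_mul, ← Finset.sum_add_distrib]
      exact Finset.sum_congr rfl fun i _ => by ring
    rw [h2]
    linear_combination h1

lemma invariant (N : ℕ) (p ν ψ : ℕ → ℝ) (lam : ℝ) (hlam : 0 < lam)
    (hp0 : ∀ i ∈ Finset.Icc 1 (N + 1), 0 < p i) (hν : ∀ i ∈ Finset.Icc 1 N, 0 < ν i)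
    (hν0 : ν 0 = 0) (hrec : PosPartRec (N + 1) p ν lam ψ) (k : ℕ) (hk : k ≤ N) :
    (∀ i ≤ k, (ψ (i + 1) - ψ i) * ν i = -(lam * ∑ l ∈ Finset.Icc 1 i, p l * ψ l)) ∨
    ((∀ i ≤ k, ((ψ (i + 1) - ψ i) * ν i + lam * ∑ l ∈ Finset.Icc 1 i, p l * ψ l)
        * (ψ (i + 1) - ψ i) = 0 ∨ i = 0) ∧ (ψ (k + 1) - ψ k) * ν k = 0 ∧ 0 ≤ ψ (k + 1) ∧
      0 ≤ ∑ l ∈ Finset.Icc 1 k, p l * ψ l) := by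
  induction k with
  | zero =>
    left
    intro i hi
    obtain rfl : i = 0 := by omega
    simp [hν0]
  | succ k ih =>
    have hν' := hν (k + 1) (Finset.mem_Icc.2 ⟨by omega, hk⟩)
    have hp' := hp0 (k + 1) (Finset.mem_Icc.2 ⟨by omega, by omega⟩)
    have hr := hrec (k + 1) (by omega) (by omega)
    simp only [Nat.add_sub_cancel] at hr
    have hD : (ψ (k + 1 + 1) - ψ (k + 1)) * ν (k + 1) =
        max ((ψ (k + 1) - ψ k) * ν k - lam * (p (k + 1) * ψ (k + 1))) 0 := by
      rw [hr]; field_simp; ring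
    have hS := Finset.sum_Icc_succ_top (show 1 ≤ k + 1 by omega) (fun l => p l * ψ l)
    rcases ih (by omega) with h | ⟨h, h0, hψ, hS0⟩
    · have hk0 := h k le_rfl
      rcases le_total 0 ((ψ (k + 1) - ψ k) * ν k - lam * (p (k + 1) * ψ (k + 1))) with hm | hm
      · left
        intro i hi
        rcases Nat.lt_or_ge i (k + 1) with hi' | hi'
        · exact h i (by omega)
        · obtain rfl : i = k + 1 := by omega
          rw [hD, max_eq_left hm, hk0, hS]; ring
      · right
        rw [max_eq_right hm] at hD
        have heq : ψ (k + 1 + 1) = ψ (k + 1) := by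
          rcases mul_eq_zero.1 hD with h1 | h1
          · linarith
          · exact absurd h1 hν'.ne'
        have hDk : 0 ≤ (ψ (k + 1) - ψ k) * ν k := by
          rcases Nat.eq_zero_or_pos k with rfl | hkp
          · simp [hν0]
          · have hr2 := hrec k hkp (by omega)
            have hνk := hν k (Finset.mem_Icc.2 ⟨by omega, by omega⟩)
            refine mul_nonneg ?_ hνk.le
            rw [hr2, add_sub_cancel_left]
            exact div_nonneg (le_max_right _ _) hνk.le
        have h5 : 0 ≤ lam * (p (k + 1) * ψ (k + 1)) := by linarith
        have h6 : 0 ≤ ψ (k + 1) :=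
          nonneg_of_mul_nonneg_right (nonneg_of_mul_nonneg_right h5 hlam) hp'
        refine ⟨?_, hD, heq ▸ h6, ?_⟩
        · intro i hi
          rcases Nat.lt_or_ge i (k + 1) with hi' | hi'
          · left; rw [h i (by omega)]; ring
          · obtain rfl : i = k + 1 := by omega
            left; rw [heq]; ring
        · rw [hS]
          refine nonneg_of_mul_nonneg_right (?_ : 0 ≤ lam * _) hlam
          rw [mul_add]; linarith
    · right
      have h5 : 0 ≤ lam * (p (k + 1) * ψ (k + 1)) := by positivity
      rw [h0, max_eq_right (by linarith)] at hD
      have heq : ψ (k + 1 + 1) = ψ (k + 1) := by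
        rcases mul_eq_zero.1 hD with h1 | h1
        · linarith
        · exact absurd h1 hν'.ne'
      refine ⟨?_, hD, heq ▸ hψ, ?_⟩
      · intro i hi
        rcases Nat.lt_or_ge i (k + 1) with hi' | hi'
        · exact h i (by omega)
        · obtain rfl : i = k + 1 := by omega
          left; rw [heq]; ring
      · rw [hS]; positivity

lemma EForm_eq (N : ℕ) (p ν ψ g : ℕ → ℝ) (lam : ℝ)
    (h : ∀ i, 1 ≤ i → i ≤ N →
      ((ψ (i + 1) - ψ i) * ν i + lam * ∑ l ∈ Finset.Icc 1 i, p l * ψ l) * (g (i + 1) - g i) = 0) :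
    EForm (N + 1) ν ψ g = lam * (∑ i ∈ Finset.Icc 1 (N + 1), p i * (ψ i * g i)
      - g (N + 1) * ∑ i ∈ Finset.Icc 1 (N + 1), p i * ψ i) := by
  have h1 := abel_aux p ψ (fun i => (ψ (i + 1) - ψ i) * ν i) g lam N h
  have h2 : EForm (N + 1) ν ψ g =
      ∑ i ∈ Finset.Icc 1 N, (ψ (i + 1) - ψ i) * ν i * (g (i + 1) - g i) := by
    simp only [EForm, Nat.add_sub_cancel]
    exact Finset.sum_congr rfl fun i _ => by ring
  rw [h2, h1]
  congr 1
  have : ∑ i ∈ Finset.Icc 1 N, p i * ψ i * (g i - g (N + 1)) =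
      ∑ i ∈ Finset.Icc 1 (N + 1), p i * ψ i * (g i - g (N + 1)) := by
    rw [Finset.sum_Icc_succ_top (by omega)]; ring
  rw [this, Finset.mul_sum, ← Finset.sum_sub_distrib]
  exact Finset.sum_congr rfl fun i _ => by ring

/-- One contraction step. -/
lemma contraction (N : ℕ) (hN : 1 ≤ N) (p ν ψ : ℕ → ℝ) (lam gap a : ℝ) (hlam : 0 < lam)
    (ha : 0 < a) (hp0 : ∀ i ∈ Finset.Icc 1 (N + 1), 0 < p i)
    (hp : ∑ i ∈ Finset.Icc 1 (N + 1), p i = 1)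
    (hν : ∀ i ∈ Finset.Icc 1 N, 0 < ν i) (hν0 : ν 0 = 0)
    (hgap0 : 0 ≤ gap) (φ : ℕ → ℝ) (hφm : Monotone φ)
    (hφ0 : ∑ i ∈ Finset.Icc 1 (N + 1), p i * φ i = 0) (hφn : 0 < φ (N + 1)) (hφ1 : φ 1 ≤ 0)
    (hφ : ∀ g, EForm (N + 1) ν g φ = gap * ∑ i ∈ Finset.Icc 1 (N + 1), p i * (g i * φ i))
    (hψ1 : ψ 1 = -a) (hrec : PosPartRec (N + 1) p ν lam ψ) (hle : gap ≤ lam)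
    (hV : 0 < varPi (N + 1) p ψ) :
    EForm (N + 1) ν ψ ψ / varPi (N + 1) p ψ - gap ≤
      (1 - p 1 * p (N + 1) / 2) * (lam - gap) := by
  set I := Finset.Icc 1 (N + 1) with hI
  have hn1 : 1 ∈ I := Finset.mem_Icc.2 ⟨le_rfl, by omega⟩
  have hnn : N + 1 ∈ I := Finset.mem_Icc.2 ⟨by omega, le_rfl⟩
  have hstep : ∀ i, 1 ≤ i → i ≤ N → ψ i ≤ ψ (i + 1) := by
    intro i h1 h2
    rw [hrec i h1 (by omega)]
    have := div_nonneg (le_max_right ((ψ i - ψ (i - 1)) * ν (i - 1) - lam * (p i * ψ i)) 0)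
      (hν i (Finset.mem_Icc.2 ⟨h1, h2⟩)).le
    linarith
  have hmono : ∀ k i, 1 ≤ i → i + k ≤ N + 1 → ψ i ≤ ψ (i + k) := by
    intro k
    induction k with
    | zero => intro i _ _; simp
    | succ k ih =>
      intro i h1 h2
      exact (ih i h1 (by omega)).trans (hstep (i + k) (by omega) (by omega))
  have hmono' : ∀ i ∈ I, ∀ j ∈ I, i ≤ j → ψ i ≤ ψ j := by
    intro i hi j hj hij
    obtain ⟨k, rfl⟩ := Nat.exists_eq_add_of_le hij
    exact hmono k i (Finset.mem_Icc.1 hi).1 (Finset.mem_Icc.1 hj).2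
  have hlo : ∀ i ∈ I, -a ≤ ψ i := fun i hi => hψ1 ▸ hmono' 1 hn1 i hi (Finset.mem_Icc.1 hi).1
  have hhi : ∀ i ∈ I, ψ i ≤ ψ (N + 1) := fun i hi => hmono' i hi _ hnn (Finset.mem_Icc.1 hi).2
  set m := ψ (N + 1) with hm
  set M := ∑ i ∈ I, p i * ψ i with hM
  set Q := ∑ i ∈ I, p i * (ψ i * ψ i) with hQ
  have hVQ : varPi (N + 1) p ψ = Q - M * M := by rw [var_eq_covv _ _ _ hp, covv]
  have hma : 0 ≤ m + a := by linarith [hlo _ hnn]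
  -- mean is at most the max
  have hMm : M ≤ m := by
    have : M ≤ ∑ i ∈ I, p i * m :=
      Finset.sum_le_sum fun i hi => mul_le_mul_of_nonneg_left (hhi i hi) (hp0 i hi).le
    rwa [← Finset.sum_mul, hp, one_mul] at this
  have hMa : -a ≤ M := by
    have : ∑ i ∈ I, p i * (-a) ≤ M :=
      Finset.sum_le_sum fun i hi => mul_le_mul_of_nonneg_left (hlo i hi) (hp0 i hi).le
    rwa [← Finset.sum_mul, hp, one_mul] at this
  have hVle : Q - M * M ≤ (m - M) * (m + a) := by
    have h1 : 0 ≤ ∑ i ∈ I, p i * ((ψ i + a) * (m - ψ i)) :=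
      Finset.sum_nonneg fun i hi => mul_nonneg (hp0 i hi).le
        (mul_nonneg (by linarith [hlo i hi]) (by linarith [hhi i hi]))
    have h2 : ∑ i ∈ I, p i * ((ψ i + a) * (m - ψ i)) = (m - a) * M - Q + a * m := by
      have : a * m = a * m * ∑ i ∈ I, p i := by rw [hp, mul_one]
      rw [this, hM, hQ, Finset.mul_sum, Finset.mul_sum, ← Finset.sum_sub_distrib,
        ← Finset.sum_add_distrib]
      exact Finset.sum_congr rfl fun i _ => by ring
    have h3 := mul_nonneg (sub_nonneg.2 hMm) (sub_nonneg.2 hMm)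
    nlinarith
  have hp1 := hp0 1 hn1
  have hpn := hp0 _ hnn
  have hp1le : p 1 ≤ 1 := hp ▸ Finset.single_le_sum (fun i hi => (hp0 i hi).le) hn1
  have hinv := invariant N p ν ψ lam hlam hp0 hν hν0 hrec N le_rfl
  -- the main two facts
  have hmain : EForm (N + 1) ν ψ ψ = lam * (Q - m * M) ∧
      p 1 * p (N + 1) / 2 * (lam - gap) * (m + a) ≤ lam * M := by
    rcases hinv with h | ⟨h, -, hψn, hS⟩
    · have hform : ∀ g, EForm (N + 1) ν ψ g = lam * (∑ i ∈ I, p i * (ψ i * g i)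
          - g (N + 1) * ∑ i ∈ I, p i * ψ i) := fun g =>
        EForm_eq N p ν ψ g lam fun i _ hi => by rw [h i hi]; ring
      refine ⟨hform ψ, ?_⟩
      have h1 := hform φ
      rw [hφ ψ, ← hM] at h1
      have hd := cov_double I p ψ φ hp
      rw [hφ0, mul_zero, sub_zero] at hd
      have hge := double_ge I (fun i j => p i * p j * ((ψ i - ψ j) * (φ i - φ j))) (by
        intro i hi j hj
        refine mul_nonneg (mul_pos (hp0 i hi) (hp0 j hj)).le ?_
        rcases le_total i j with hij | hij
        · exact mul_nonneg_of_nonpos_of_nonpos (by linarith [hmono' i hi j hj hij])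
            (by linarith [hφm hij])
        · exact mul_nonneg (by linarith [hmono' j hj i hi hij])
            (by linarith [hφm hij])) (N + 1) 1 hnn hn1
      rw [hd] at hge
      simp only [hψ1, ← hm] at hge
      set C := ∑ i ∈ I, p i * (ψ i * φ i)
      have h2 : p (N + 1) * p 1 * ((m + a) * φ (N + 1)) ≤ 2 * C := by
        refine le_trans ?_ hge
        refine mul_le_mul_of_nonneg_left ?_ (mul_pos hpn hp1).le
        rw [sub_neg_eq_add]
        exact mul_le_mul_of_nonneg_left (by linarith) hma
      have h3 : (lam - gap) * (p (N + 1) * p 1 * ((m + a) * φ (N + 1))) ≤ (lam - gap) * (2 * C) :=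
        mul_le_mul_of_nonneg_left h2 (by linarith)
      refine le_of_mul_le_mul_right (?_ : _ * φ (N + 1) ≤ _ * φ (N + 1)) hφn
      linarith
    · refine ⟨EForm_eq N p ν ψ ψ lam fun i h1 hi => (h i hi).resolve_right (by omega), ?_⟩
      have hMe : M = ∑ i ∈ Finset.Icc 1 N, p i * ψ i + p (N + 1) * m := by
        rw [hM, hI, Finset.sum_Icc_succ_top (by omega)]
      have h1 : p (N + 1) * m ≤ M := by linarith
      have hm0 : 0 ≤ m := hψn
      have hM0 : 0 ≤ M := le_trans (by positivity) h1
      have h2 : p 1 * a ≤ m := by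
        have h3 : p 1 * (m + a) ≤ ∑ i ∈ I, p i * (m - ψ i) := by
          have := Finset.single_le_sum (f := fun i => p i * (m - ψ i))
            (fun i hi => mul_nonneg (hp0 i hi).le (sub_nonneg.2 (hhi i hi))) hn1
          simpa [hψ1] using this
        have h4 : ∑ i ∈ I, p i * (m - ψ i) = m - M := by
          simp only [mul_sub, Finset.sum_sub_distrib, ← Finset.sum_mul, hp]
          rw [← hM]; ring
        nlinarith
      have h3 : p 1 / 2 * (m + a) ≤ m := by nlinarith
      have h4 : p (N + 1) * (p 1 / 2 * (m + a)) ≤ M :=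
        (mul_le_mul_of_nonneg_left h3 hpn.le).trans h1
      have h5 : (lam - gap) * (p (N + 1) * (p 1 / 2 * (m + a))) ≤ lam * M :=
        mul_le_mul (by linarith) h4 (by positivity) hlam.le
      linarith
  obtain ⟨hE, hB⟩ := hmain
  rw [hVQ] at hV ⊢
  rw [sub_le_iff_le_add, div_le_iff₀ hV, hE]
  have h1 := mul_le_mul_of_nonneg_left hB (sub_nonneg.2 hMm)
  have h2 : p 1 * p (N + 1) / 2 * (lam - gap) * (Q - M * M) ≤
      p 1 * p (N + 1) / 2 * (lam - gap) * ((m - M) * (m + a)) :=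
    mul_le_mul_of_nonneg_left hVle (mul_nonneg (by positivity) (by linarith))
  linarith

theorem stmt2 (n : ℕ) (hn : 2 ≤ n) (π ν : ℕ → ℝ)
    (hπ : ∀ i ∈ Finset.Icc 1 n, 0 < π i)
    (hπ1 : ∑ i ∈ Finset.Icc 1 n, π i = 1)
    (hν : ∀ i ∈ Finset.Icc 1 (n - 1), 0 < ν i)
    (hν0 : ν 0 = 0) (hνn : ν n = 0)
    (gap : ℝ) (hgap : IsSpectralGap n π ν gap) :
    ∃ σ : ℝ, 0 < σ ∧ σ < 1 ∧
      ∀ (a : ℝ), 0 < a →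
      ∀ (lamSeq : ℕ → ℝ), 0 < lamSeq 0 →
      ∀ (ψ : ℕ → ℕ → ℝ),
        (∀ k, ψ k 1 = -a) →
        (∀ k, PosPartRec n π ν (lamSeq k) (ψ k)) →
        (∀ k, lamSeq (k + 1) = EForm n ν (ψ k) (ψ k) / varPi n π (ψ k)) →
        ∀ k, 1 ≤ k →
          0 ≤ lamSeq k - gap ∧ lamSeq k - gap ≤ σ ^ (k - 1) * lamSeq 1 := by
  obtain ⟨N, rfl⟩ : ∃ N, n = N + 1 := ⟨n - 1, by omega⟩
  obtain ⟨φ, hφm, hφ0, hφn, hφ1, hφ⟩ := exists_eigen (N + 1) hn π ν hπ hπ1 hν gap hgap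
  have hgap0 : 0 ≤ gap := by
    obtain ⟨f, hf, hfe⟩ := hgap.1
    rw [hfe]; exact div_nonneg (EForm_nonneg _ ν f hν) (var_pos _ π f hπ hπ1 hf).le
  have hn1 : 1 ∈ Finset.Icc 1 (N + 1) := Finset.mem_Icc.2 ⟨le_rfl, by omega⟩
  have hn2 : 2 ∈ Finset.Icc 1 (N + 1) := Finset.mem_Icc.2 ⟨by omega, by omega⟩
  have hnn : N + 1 ∈ Finset.Icc 1 (N + 1) := Finset.mem_Icc.2 ⟨by omega, le_rfl⟩
  have hp1 := hπ 1 hn1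
  have hpn := hπ _ hnn
  have hp1le : π 1 ≤ 1 := hπ1 ▸ Finset.single_le_sum (fun i hi => (hπ i hi).le) hn1
  have hpnle : π (N + 1) ≤ 1 := hπ1 ▸ Finset.single_le_sum (fun i hi => (hπ i hi).le) hnn
  have hprod : π 1 * π (N + 1) ≤ 1 := mul_le_one₀ hp1le hpn.le hpnle
  have hprod0 : 0 < π 1 * π (N + 1) := mul_pos hp1 hpn
  have hσ0 : 0 < 1 - π 1 * π (N + 1) / 2 := by linarith
  refine ⟨1 - π 1 * π (N + 1) / 2, hσ0, by linarith, ?_⟩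
  intro a ha lamSeq hl0 ψ hψ1 hrec hstep
  simp only [Nat.add_sub_cancel] at hν
  have hν1 := hν 1 (Finset.mem_Icc.2 ⟨le_rfl, by omega⟩)
  have hne : ∀ k, 0 < lamSeq k → ψ k 1 < ψ k 2 := by
    intro k hk
    have h := hrec k 1 le_rfl (by omega)
    simp only [Nat.sub_self, hν0, mul_zero, hψ1] at h
    norm_num at h
    rw [h, hψ1]
    have h2 : 0 < lamSeq k * (π 1 * a) := by positivity
    have : 0 < max (lamSeq k * (π 1 * a)) 0 / ν 1 := div_pos (lt_max_of_lt_left h2) hν1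
    linarith
  have hnc : ∀ k, 0 < lamSeq k → Nonconstant (N + 1) (ψ k) := fun k hk =>
    ⟨1, hn1, 2, hn2, (hne k hk).ne⟩
  have hpos : ∀ k, 0 < lamSeq k := by
    intro k
    induction k with
    | zero => exact hl0
    | succ k ih =>
      rw [hstep k]
      refine div_pos ?_ (var_pos _ π _ hπ hπ1 (hnc k ih))
      refine Finset.sum_pos' (fun i hi => mul_nonneg (mul_self_nonneg _) (hν i hi).le)
        ⟨1, Finset.mem_Icc.2 ⟨le_rfl, by simp; omega⟩, ?_⟩
      exact mul_pos (mul_self_pos.2 (sub_ne_zero.2 (hne k ih).ne)) hν1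
  have hge : ∀ k, gap ≤ lamSeq (k + 1) := fun k =>
    hgap.2 ⟨ψ k, hnc k (hpos k), hstep k⟩
  intro k hk
  obtain ⟨j, rfl⟩ : ∃ j, k = j + 1 := ⟨k - 1, by omega⟩
  refine ⟨sub_nonneg.2 (hge j), ?_⟩
  rw [Nat.add_sub_cancel]
  clear hk
  induction j with
  | zero => simpa using hgap0
  | succ j ih =>
    have h := contraction N (by omega) π ν (ψ (j + 1)) (lamSeq (j + 1)) gap a (hpos _) ha hπ hπ1
      hν hν0 hgap0 φ hφm hφ0 hφn hφ1 hφ (hψ1 _) (hrec _) (hge j)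
      (var_pos _ π _ hπ hπ1 (hnc _ (hpos _)))
    rw [← hstep (j + 1)] at h
    refine h.trans ?_
    rw [pow_succ', mul_assoc]
    exact mul_le_mul_of_nonneg_left ih hσ0.le
end

section
/- For the dichotomy algorithm (A2), one has 0 ≤ max{U_k − λ^G_{π,ν}, λ^G_{π,ν} − L_k} ≤ (U_0 − L_0) 2^{−k} for all k ≥ 0. -/
open Finset

/-- Basic facts about the recursion, in terms of the flow `F`. -/
lemma flow_rec (n : ℕ) (π ν : ℕ → ℝ)
    (hν : ∀ i ∈ Finset.Icc 1 (n - 1), 0 < ν i) (lam : ℝ) (ψ : ℕ → ℝ)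
    (hrec : PosPartRec n π ν lam ψ) (i : ℕ) (h1 : 1 ≤ i) (hi : i < n) :
    (ψ (i + 1) - ψ i) * ν i =
      max ((ψ i - ψ (i - 1)) * ν (i - 1) - lam * (π i * ψ i)) 0 := by
  have hp := hν i (Finset.mem_Icc.2 ⟨h1, by omega⟩)
  rw [hrec i h1 hi]
  field_simp
  ring

lemma psi_step (n : ℕ) (π ν : ℕ → ℝ)
    (hν : ∀ i ∈ Finset.Icc 1 (n - 1), 0 < ν i) (lam : ℝ) (ψ : ℕ → ℝ)
    (hrec : PosPartRec n π ν lam ψ) (i : ℕ) (h1 : 1 ≤ i) (hi : i < n) :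
    ψ i ≤ ψ (i + 1) := by
  have hp := hν i (Finset.mem_Icc.2 ⟨h1, by omega⟩)
  rw [hrec i h1 hi]
  have : 0 ≤ max ((ψ i - ψ (i - 1)) * ν (i - 1) - lam * (π i * ψ i)) 0 / ν i :=
    div_nonneg (le_max_right _ _) hp.le
  linarith

lemma flow_nonneg (n : ℕ) (π ν : ℕ → ℝ)
    (hν : ∀ i ∈ Finset.Icc 1 (n - 1), 0 < ν i) (hν0 : ν 0 = 0) (lam : ℝ) (ψ : ℕ → ℝ)
    (hrec : PosPartRec n π ν lam ψ) (i : ℕ) (hi : i < n) :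
    0 ≤ (ψ (i + 1) - ψ i) * ν i := by
  rcases Nat.eq_zero_or_pos i with h | h
  · subst h; simp [hν0]
  · rw [flow_rec n π ν hν lam ψ hrec i h hi]; exact le_max_right _ _

/-- Once the flow vanishes, `ψ` is nonnegative and constant from there on. -/
lemma flow_zero (n : ℕ) (π ν : ℕ → ℝ)
    (hπ : ∀ i ∈ Finset.Icc 1 n, 0 < π i)
    (hν : ∀ i ∈ Finset.Icc 1 (n - 1), 0 < ν i) (hν0 : ν 0 = 0) (lam : ℝ) (hlam : 0 < lam)
    (ψ : ℕ → ℝ)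
    (hrec : PosPartRec n π ν lam ψ) (i : ℕ) (h1 : 1 ≤ i) (hi : i < n)
    (h0 : (ψ (i + 1) - ψ i) * ν i = 0) :
    0 ≤ ψ i ∧ ∀ j, i ≤ j → j ≤ n → ψ j = ψ i := by
  have hψ : 0 ≤ ψ i := by
    have h := flow_rec n π ν hν lam ψ hrec i h1 hi
    rw [h0] at h
    have h2 := le_max_left ((ψ i - ψ (i - 1)) * ν (i - 1) - lam * (π i * ψ i)) 0
    have h3 := flow_nonneg n π ν hν hν0 lam ψ hrec (i - 1) (by omega)
    rw [Nat.sub_add_cancel h1] at h3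
    have hp := hπ i (Finset.mem_Icc.2 ⟨h1, hi.le⟩)
    by_contra hneg
    have : lam * (π i * ψ i) < 0 :=
      mul_neg_of_pos_of_neg hlam (mul_neg_of_pos_of_neg hp (not_le.1 hneg))
    linarith
  refine ⟨hψ, ?_⟩
  have key : ∀ j, i ≤ j → j < n → ψ j = ψ i ∧ (ψ (j + 1) - ψ j) * ν j = 0 := by
    intro j hj
    induction j, hj using Nat.le_induction with
    | base => intro _; exact ⟨rfl, h0⟩
    | succ j hj ih =>
      intro hjn
      obtain ⟨e1, e2⟩ := ih (by omega)
      have hp := hν j (Finset.mem_Icc.2 ⟨by omega, by omega⟩)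
      have e3 : ψ (j + 1) = ψ i := by
        rcases mul_eq_zero.1 e2 with h | h <;> linarith
      refine ⟨e3, ?_⟩
      rw [flow_rec n π ν hν lam ψ hrec (j + 1) (by omega) hjn, Nat.add_sub_cancel, e2, e3]
      have hpp := hπ (j + 1) (Finset.mem_Icc.2 ⟨by omega, hjn.le⟩)
      apply max_eq_right
      have : 0 ≤ lam * (π (j + 1) * ψ i) := by positivity
      linarith
  intro j hj hjn
  rcases Nat.lt_or_ge j n with h | h
  · exact (key j hj h).1
  · obtain ⟨m, rfl⟩ : ∃ m, j = m + 1 := ⟨j - 1, by omega⟩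
    obtain ⟨e1, e2⟩ := key m (by omega) (by omega)
    have hp := hν m (Finset.mem_Icc.2 ⟨by omega, by omega⟩)
    rcases mul_eq_zero.1 e2 with h | h <;> linarith

lemma psi_mono (n : ℕ) (π ν : ℕ → ℝ)
    (hν : ∀ i ∈ Finset.Icc 1 (n - 1), 0 < ν i) (lam : ℝ) (ψ : ℕ → ℝ)
    (hrec : PosPartRec n π ν lam ψ) (i j : ℕ) (h1 : 1 ≤ i) (hij : i ≤ j) (hj : j ≤ n) :
    ψ i ≤ ψ j := by
  induction j, hij using Nat.le_induction with
  | base => exact le_rfl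
  | succ j hj' ih =>
    exact (ih (by omega)).trans (psi_step n π ν hν lam ψ hrec j (by omega) (by omega))

lemma varPi_eq (n : ℕ) (π : ℕ → ℝ) (hπ1 : ∑ i ∈ Finset.Icc 1 n, π i = 1) (f : ℕ → ℝ) :
    varPi n π f = ∑ i ∈ Finset.Icc 1 n, (f i - piMean n π f) ^ 2 * π i := by
  have : ∀ i, (f i - piMean n π f) ^ 2 * π i =
      (f i) ^ 2 * π i - 2 * piMean n π f * (f i * π i) + (piMean n π f) ^ 2 * π i := by
    intro i; ring
  simp_rw [this]
  rw [Finset.sum_add_distrib, Finset.sum_sub_distrib, ← Finset.mul_sum, ← Finset.mul_sum, hπ1]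
  unfold varPi
  have h : ∑ i ∈ Finset.Icc 1 n, f i * π i = piMean n π f := rfl
  have h' : ∑ i ∈ Finset.Icc 1 n, f i ^ 2 * π i = piMean n π (fun i => f i ^ 2) := rfl
  rw [h, h']; ring

lemma varPi_pos (n : ℕ) (π : ℕ → ℝ) (hπ : ∀ i ∈ Finset.Icc 1 n, 0 < π i)
    (hπ1 : ∑ i ∈ Finset.Icc 1 n, π i = 1) (f : ℕ → ℝ) (hf : Nonconstant n f) :
    0 < varPi n π f := by
  rw [varPi_eq n π hπ1]
  obtain ⟨i, hi, j, hj, hij⟩ := hf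
  apply Finset.sum_pos'
  · intro k hk
    exact mul_nonneg (sq_nonneg _) (hπ k hk).le
  · by_cases h : f i = piMean n π f
    · refine ⟨j, hj, mul_pos (sq_pos_of_ne_zero ?_) (hπ j hj)⟩
      intro h2; apply hij; linarith
    · exact ⟨i, hi, mul_pos (sq_pos_of_ne_zero (sub_ne_zero.2 h)) (hπ i hi)⟩

lemma parts1 (f ν : ℕ → ℝ) (hν0 : ν 0 = 0) (N : ℕ) :
    ∑ i ∈ Finset.Icc 1 N, (f i - f (i + 1)) * (f i - f (i + 1)) * ν i =
    ∑ i ∈ Finset.Icc 1 N, f i * ((f i - f (i - 1)) * ν (i - 1) - (f (i + 1) - f i) * ν i)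
      + f (N + 1) * ((f (N + 1) - f N) * ν N) := by
  induction N with
  | zero => simp [hν0]
  | succ N ih =>
    rw [Finset.sum_Icc_succ_top (by omega), Finset.sum_Icc_succ_top (by omega), ih,
      Nat.add_sub_cancel]
    ring

lemma parts2 (f ν : ℕ → ℝ) (hν0 : ν 0 = 0) (N : ℕ) :
    ∑ i ∈ Finset.Icc 1 N, ((f i - f (i - 1)) * ν (i - 1) - (f (i + 1) - f i) * ν i)
      = - ((f (N + 1) - f N) * ν N) := by
  induction N with
  | zero => simp [hν0]
  | succ N ih =>
    rw [Finset.sum_Icc_succ_top (by omega), ih, Nat.add_sub_cancel]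
    ring

/-- If the mean of `ψ` is nonnegative then `gap ≤ lam`. -/
lemma gap_le (n : ℕ) (hn : 2 ≤ n) (π ν : ℕ → ℝ)
    (hπ : ∀ i ∈ Finset.Icc 1 n, 0 < π i)
    (hπ1 : ∑ i ∈ Finset.Icc 1 n, π i = 1)
    (hν : ∀ i ∈ Finset.Icc 1 (n - 1), 0 < ν i)
    (hν0 : ν 0 = 0) (hνn : ν n = 0)
    (gap : ℝ) (hgap : IsSpectralGap n π ν gap)
    (a : ℝ) (ha : 0 < a) (lam : ℝ) (hlam : 0 < lam) (ψ : ℕ → ℝ) (hψ1 : ψ 1 = -a)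
    (hrec : PosPartRec n π ν lam ψ) (hm : 0 ≤ piMean n π ψ) : gap ≤ lam := by
  have hmono := psi_mono n π ν hν lam ψ hrec
  obtain ⟨c, hc, hc0⟩ : ∃ c ∈ Set.Icc (-a) (ψ n), piMean n π (fun i => min (ψ i) c) = 0 := by
    have hle : -a ≤ ψ n := hψ1 ▸ hmono 1 n le_rfl (by omega) le_rfl
    have hcont : ContinuousOn (fun c => piMean n π (fun i => min (ψ i) c))
        (Set.Icc (-a) (ψ n)) := by
      unfold piMean
      fun_prop
    have := intermediate_value_Icc hle hcont
    apply this
    constructor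
    · have : piMean n π (fun i => min (ψ i) (-a)) = -a := by
        unfold piMean
        rw [Finset.sum_congr rfl (g := fun i => (-a) * π i), ← Finset.mul_sum, hπ1, mul_one]
        intro i hi
        have hi := Finset.mem_Icc.1 hi
        have := hmono 1 i le_rfl hi.1 hi.2
        simp only
        rw [min_eq_right (by linarith)]
      simp only [this]; linarith
    · have : piMean n π (fun i => min (ψ i) (ψ n)) = piMean n π ψ := by
        unfold piMean
        apply Finset.sum_congr rfl
        intro i hi
        have hi := Finset.mem_Icc.1 hi
        simp only
        rw [min_eq_left (hmono i n hi.1 hi.2 le_rfl)]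
      simp only [this]; exact hm
  set f : ℕ → ℝ := fun i => min (ψ i) c with hf
  have hnc : Nonconstant n f := by
    by_contra hcon
    have hall : ∀ i ∈ Finset.Icc 1 n, f i = f 1 := by
      intro i hi
      by_contra hne
      exact hcon ⟨i, hi, 1, Finset.mem_Icc.2 ⟨le_rfl, by omega⟩, hne⟩
    have : piMean n π f = f 1 := by
      unfold piMean
      rw [Finset.sum_congr rfl (g := fun i => f 1 * π i), ← Finset.mul_sum, hπ1, mul_one]
      intro i hi
      rw [hall i hi]
    have h2 : f 1 ≤ ψ 1 := min_le_left _ _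
    linarith
  have hvar := varPi_pos n π hπ hπ1 f hnc
  have hle : gap ≤ EForm n ν f f / varPi n π f := hgap.2 ⟨f, hnc, rfl⟩
  refine hle.trans ?_
  rw [div_le_iff₀ hvar]
  have hE : EForm n ν f f =
      ∑ i ∈ Finset.Icc 1 n, f i * ((f i - f (i - 1)) * ν (i - 1) - (f (i + 1) - f i) * ν i) := by
    have h1 := parts1 f ν hν0 n
    rw [hνn] at h1
    simp only [mul_zero, add_zero] at h1
    rw [← h1]
    obtain ⟨m, rfl⟩ : ∃ m, n = m + 1 := ⟨n - 1, by omega⟩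
    rw [Finset.sum_Icc_succ_top (by omega), hνn]
    simp [EForm]
  have hV : varPi n π f = ∑ i ∈ Finset.Icc 1 n, f i ^ 2 * π i := by
    unfold varPi
    rw [hc0]; simp [piMean]
  have hS := parts2 f ν hν0 n
  rw [hνn, mul_zero, neg_zero] at hS
  have hM : ∑ i ∈ Finset.Icc 1 n, f i * π i = 0 := hc0
  have hkey : ∑ i ∈ Finset.Icc 1 n, (f i - c) *
      (((f i - f (i - 1)) * ν (i - 1) - (f (i + 1) - f i) * ν i) - lam * (f i * π i)) ≤ 0 := by
    apply Finset.sum_nonpos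
    intro i hi
    have hi := Finset.mem_Icc.1 hi
    rcases le_or_gt c (ψ i) with h | h
    · have : f i = c := min_eq_right h
      rw [this]; simp
    · have hfi : f i = ψ i := min_eq_left h.le
      have hin : i < n := by
        rcases hi.2.lt_or_eq with h' | h'
        · exact h'
        · subst h'; exact absurd hc.2 (not_le.2 h)
      apply mul_nonpos_of_nonpos_of_nonneg
      · rw [hfi]; linarith
      have hF := flow_rec n π ν hν lam ψ hrec i hi.1 hin
      have hprev : (f i - f (i - 1)) * ν (i - 1) = (ψ i - ψ (i - 1)) * ν (i - 1) := by
        rcases Nat.lt_or_ge 1 i with h' | h'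
        · have := hmono (i - 1) i (by omega) (by omega) hi.2
          have : f (i - 1) = ψ (i - 1) := min_eq_left (by linarith)
          rw [this, hfi]
        · have : i = 1 := by omega
          subst this; simp [hν0]
      have hnext : (f (i + 1) - f i) * ν i ≤ (ψ (i + 1) - ψ i) * ν i := by
        have hp := hν i (Finset.mem_Icc.2 ⟨hi.1, by omega⟩)
        have : f (i + 1) ≤ ψ (i + 1) := min_le_left _ _
        apply mul_le_mul_of_nonneg_right _ hp.le
        linarith
      have hne : (ψ (i + 1) - ψ i) * ν i ≠ 0 := by
        intro h0
        have := (flow_zero n π ν hπ hν hν0 lam hlam ψ hrec i hi.1 hin h0).2 n hin.le le_rfl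
        linarith [hc.2]
      rcases max_choice ((ψ i - ψ (i - 1)) * ν (i - 1) - lam * (π i * ψ i)) 0 with h' | h'
      · rw [h'] at hF
        rw [hprev, hfi]
        rw [hfi] at hnext
        nlinarith
      · rw [h'] at hF; exact absurd hF hne
  have hexp : ∑ i ∈ Finset.Icc 1 n, (f i - c) *
      (((f i - f (i - 1)) * ν (i - 1) - (f (i + 1) - f i) * ν i) - lam * (f i * π i)) =
      EForm n ν f f - lam * varPi n π f := by
    have : ∀ i, (f i - c) *
      (((f i - f (i - 1)) * ν (i - 1) - (f (i + 1) - f i) * ν i) - lam * (f i * π i)) =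
      f i * ((f i - f (i - 1)) * ν (i - 1) - (f (i + 1) - f i) * ν i) - lam * (f i ^ 2 * π i)
      - c * ((f i - f (i - 1)) * ν (i - 1) - (f (i + 1) - f i) * ν i)
      + c * lam * (f i * π i) := by intro i; ring
    rw [Finset.sum_congr rfl (fun i _ => this i), Finset.sum_add_distrib,
      Finset.sum_sub_distrib, Finset.sum_sub_distrib, ← Finset.mul_sum, ← Finset.mul_sum,
      ← Finset.mul_sum, hS, hM, hE, hV]
    ring
  linarith

/-- Accumulated energy `S`. -/
noncomputable def accS (f g : ℕ → ℝ) (j : ℕ) : ℝ :=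
  ∑ k ∈ Finset.range j, (f (k + 1) - f k) ^ 2 / (g (k + 1) - g k)

lemma cs_step (x y A B d s : ℝ) (hA : 0 ≤ A) (hB : 0 ≤ B) (hd : 0 < d) (hs : s = y ^ 2 / d)
    (hx : x ^ 2 ≤ A * B) : (x + y) ^ 2 ≤ (A + d) * (B + s) := by
  have hy : y ^ 2 = d * s := by rw [hs]; field_simp
  have hs0 : 0 ≤ s := by rw [hs]; positivity
  have h1 : (2 * (x * y)) ^ 2 ≤ (A * s + d * B) ^ 2 := by
    have : x ^ 2 * y ^ 2 ≤ (A * B) * (d * s) := by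
      rw [hy]; exact mul_le_mul_of_nonneg_right hx (by positivity)
    nlinarith [sq_nonneg (A * s - d * B)]
  have h2 := le_of_abs_le (abs_le_of_sq_le_sq h1 (by positivity))
  nlinarith

lemma cs_le (n : ℕ) (f g : ℕ → ℝ) (hg : ∀ k, 1 ≤ k → k < n → 0 < g (k + 1) - g k)
    (i j : ℕ) (h1 : 1 ≤ i) (hij : i ≤ j) (hj : j ≤ n) :
    0 ≤ g j - g i ∧ 0 ≤ accS f g j - accS f g i ∧
    (f j - f i) ^ 2 ≤ (g j - g i) * (accS f g j - accS f g i) := by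
  induction j, hij using Nat.le_induction with
  | base => simp
  | succ j hij ih =>
    obtain ⟨a1, a2, a3⟩ := ih (by omega)
    have hd := hg j (by omega) (by omega)
    have hS : accS f g (j + 1) = accS f g j + (f (j + 1) - f j) ^ 2 / (g (j + 1) - g j) := by
      unfold accS; rw [Finset.sum_range_succ]
    have hs0 : 0 ≤ (f (j + 1) - f j) ^ 2 / (g (j + 1) - g j) := by positivity
    have := cs_step (f j - f i) (f (j + 1) - f j) _ _ _ _ a1 a2 hd rfl a3
    refine ⟨by linarith, by rw [hS]; linarith, ?_⟩
    rw [hS]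
    calc (f (j + 1) - f i) ^ 2 = (f j - f i + (f (j + 1) - f j)) ^ 2 := by ring
      _ ≤ _ := this
      _ = _ := by ring

lemma cov_double_s3 (n : ℕ) (π : ℕ → ℝ) (hπ1 : ∑ i ∈ Finset.Icc 1 n, π i = 1) (g S : ℕ → ℝ) :
    ∑ i ∈ Finset.Icc 1 n, ∑ j ∈ Finset.Icc 1 n, π i * π j * ((g j - g i) * (S j - S i)) =
    2 * (∑ i ∈ Finset.Icc 1 n, (g i * S i) * π i - piMean n π g * piMean n π S) := by
  have h1 : ∀ i, ∑ j ∈ Finset.Icc 1 n, π i * π j * ((g j - g i) * (S j - S i)) =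
      π i * (∑ j ∈ Finset.Icc 1 n, (g j * S j) * π j) - (g i * π i) * piMean n π S
      - (S i * π i) * piMean n π g + (g i * S i) * π i := by
    intro i
    have : (g i * S i) * π i = ((g i * S i) * π i) * ∑ j ∈ Finset.Icc 1 n, π j := by
      rw [hπ1, mul_one]
    rw [this]
    unfold piMean
    rw [Finset.mul_sum, Finset.mul_sum, Finset.mul_sum, Finset.mul_sum,
      ← Finset.sum_sub_distrib, ← Finset.sum_sub_distrib, ← Finset.sum_add_distrib]
    apply Finset.sum_congr rfl
    intro j _
    ring
  rw [Finset.sum_congr rfl (fun i _ => h1 i), Finset.sum_add_distrib, Finset.sum_sub_distrib,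
    Finset.sum_sub_distrib, ← Finset.sum_mul, ← Finset.sum_mul, ← Finset.sum_mul, hπ1]
  have e1 : ∑ i ∈ Finset.Icc 1 n, g i * π i = piMean n π g := rfl
  have e2 : ∑ i ∈ Finset.Icc 1 n, S i * π i = piMean n π S := rfl
  rw [e1, e2]; ring

lemma parts3 (w S : ℕ → ℝ) (N : ℕ) :
    ∑ j ∈ Finset.Icc 1 (N + 1), w j * S j =
    (∑ j ∈ Finset.Icc 1 (N + 1), w j) * S (N + 1) -
      ∑ k ∈ Finset.Icc 1 N, (∑ j ∈ Finset.Icc 1 k, w j) * (S (k + 1) - S k) := by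
  induction N with
  | zero => simp
  | succ N ih =>
    have e1 := Finset.sum_Icc_succ_top (a := 1) (b := N + 1) (by omega) (fun j => w j * S j)
    have e2 := Finset.sum_Icc_succ_top (a := 1) (b := N + 1) (by omega) w
    have e3 := Finset.sum_Icc_succ_top (a := 1) (b := N) (by omega)
      (fun k => (∑ j ∈ Finset.Icc 1 k, w j) * (S (k + 1) - S k))
    rw [e1, e2, e3, ih]
    ring

lemma flow_ge (n : ℕ) (π ν : ℕ → ℝ)
    (hν : ∀ i ∈ Finset.Icc 1 (n - 1), 0 < ν i) (hν0 : ν 0 = 0) (lam : ℝ) (ψ : ℕ → ℝ)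
    (hrec : PosPartRec n π ν lam ψ) (k : ℕ) (hk : k < n) :
    - (lam * ∑ j ∈ Finset.Icc 1 k, ψ j * π j) ≤ (ψ (k + 1) - ψ k) * ν k := by
  induction k with
  | zero => simp [hν0]
  | succ k ih =>
    rw [flow_rec n π ν hν lam ψ hrec (k + 1) (by omega) hk, Finset.sum_Icc_succ_top (by omega),
      Nat.add_sub_cancel]
    refine le_trans ?_ (le_max_left _ _)
    have := ih (by omega)
    linarith

/-- If the mean of `ψ` is nonpositive then `lam ≤ gap`. -/
lemma le_gap (n : ℕ) (hn : 2 ≤ n) (π ν : ℕ → ℝ)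
    (hπ : ∀ i ∈ Finset.Icc 1 n, 0 < π i)
    (hπ1 : ∑ i ∈ Finset.Icc 1 n, π i = 1)
    (hν : ∀ i ∈ Finset.Icc 1 (n - 1), 0 < ν i)
    (hν0 : ν 0 = 0)
    (gap : ℝ) (hgap : IsSpectralGap n π ν gap)
    (a : ℝ) (ha : 0 < a) (lam : ℝ) (hlam : 0 < lam) (ψ : ℕ → ℝ) (hψ1 : ψ 1 = -a)
    (hrec : PosPartRec n π ν lam ψ) (hm : piMean n π ψ ≤ 0) : lam ≤ gap := by
  have hmono := psi_mono n π ν hν lam ψ hrec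
  have hge := flow_ge n π ν hν hν0 lam ψ hrec
  -- the flow is positive
  have hpos : ∀ k, 1 ≤ k → k < n → 0 < (ψ (k + 1) - ψ k) * ν k := by
    intro k h1 hk
    rcases (flow_nonneg n π ν hν hν0 lam ψ hrec k hk).lt_or_eq with h | h
    · exact h
    exfalso
    obtain ⟨p0, pc⟩ := flow_zero n π ν hπ hν hν0 lam hlam ψ hrec k h1 hk h.symm
    have hk' := hge k hk
    rw [← h] at hk'
    have hs : 0 ≤ ∑ j ∈ Finset.Icc 1 k, ψ j * π j := by
      by_contra hcon
      nlinarith [mul_neg_of_pos_of_neg hlam (not_le.1 hcon)]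
    have hsplit : piMean n π ψ = ∑ j ∈ Finset.Icc 1 k, ψ j * π j
        + ∑ j ∈ Finset.Ioc k n, ψ k * π j := by
      unfold piMean
      have hu : Finset.Icc 1 n = Finset.Icc 1 k ∪ Finset.Ioc k n := by
        ext x; simp only [Finset.mem_Icc, Finset.mem_union, Finset.mem_Ioc]; omega
      rw [hu, Finset.sum_union]
      · congr 1
        apply Finset.sum_congr rfl
        intro j hj
        have hj := Finset.mem_Ioc.1 hj
        rw [pc j (by omega) hj.2]
      · rw [Finset.disjoint_left]
        intro x hx hx'
        have := Finset.mem_Icc.1 hx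
        have := Finset.mem_Ioc.1 hx'
        omega
    rw [← Finset.mul_sum] at hsplit
    have hq : 0 < ∑ j ∈ Finset.Ioc k n, π j := by
      apply Finset.sum_pos
      · intro j hj
        have hj := Finset.mem_Ioc.1 hj
        exact hπ j (Finset.mem_Icc.2 ⟨by omega, hj.2⟩)
      · exact ⟨n, Finset.mem_Ioc.2 ⟨hk, le_rfl⟩⟩
    rcases p0.lt_or_eq with h' | h'
    · have := mul_pos h' hq
      linarith
    · -- all values up to `k` are nonpositive
      have : ∑ j ∈ Finset.Icc 1 k, ψ j * π j < 0 := by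
        apply Finset.sum_neg'
        · intro j hj
          have hj := Finset.mem_Icc.1 hj
          have := hmono j k hj.1 hj.2 hk.le
          exact mul_nonpos_of_nonpos_of_nonneg (by linarith)
            (hπ j (Finset.mem_Icc.2 ⟨hj.1, by omega⟩)).le
        · refine ⟨1, Finset.mem_Icc.2 ⟨le_rfl, h1⟩, ?_⟩
          rw [hψ1]
          exact mul_neg_of_neg_of_pos (by linarith)
            (hπ 1 (Finset.mem_Icc.2 ⟨le_rfl, by omega⟩))
      linarith
  have hg : ∀ k, 1 ≤ k → k < n → 0 < ψ (k + 1) - ψ k := by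
    intro k h1 hk
    exact pos_of_mul_pos_left (hpos k h1 hk) (hν k (Finset.mem_Icc.2 ⟨h1, by omega⟩)).le
  obtain ⟨f, hnc, hfe⟩ := hgap.1
  have hvar := varPi_pos n π hπ hπ1 f hnc
  rw [hfe, le_div_iff₀ hvar]
  set S := accS f ψ with hSdef
  -- variance is bounded by a covariance
  have hcov : varPi n π f ≤
      ∑ i ∈ Finset.Icc 1 n, (ψ i * S i) * π i - piMean n π ψ * piMean n π S := by
    have d1 := cov_double_s3 n π hπ1 f f
    have d2 := cov_double_s3 n π hπ1 ψ S
    have hle : ∑ i ∈ Finset.Icc 1 n, ∑ j ∈ Finset.Icc 1 n,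
          π i * π j * ((f j - f i) * (f j - f i)) ≤
        ∑ i ∈ Finset.Icc 1 n, ∑ j ∈ Finset.Icc 1 n,
          π i * π j * ((ψ j - ψ i) * (S j - S i)) := by
      apply Finset.sum_le_sum
      intro i hi
      apply Finset.sum_le_sum
      intro j hj
      apply mul_le_mul_of_nonneg_left _ (mul_pos (hπ i hi) (hπ j hj)).le
      have hi := Finset.mem_Icc.1 hi
      have hj := Finset.mem_Icc.1 hj
      rcases le_total i j with h | h
      · have := (cs_le n f ψ hg i j hi.1 h hj.2).2.2
        rw [← hSdef] at this
        linarith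
      · have := (cs_le n f ψ hg j i hj.1 h hi.2).2.2
        rw [← hSdef] at this
        linarith
    have hv : varPi n π f = ∑ i ∈ Finset.Icc 1 n, (f i * f i) * π i
        - piMean n π f * piMean n π f := by
      unfold varPi
      simp only [piMean, sq]
    linarith
  have hsum : ∑ i ∈ Finset.Icc 1 n, (ψ i * S i) * π i - piMean n π ψ * piMean n π S =
      ∑ i ∈ Finset.Icc 1 n, ((ψ i - piMean n π ψ) * π i) * S i := by
    have : ∀ i, ((ψ i - piMean n π ψ) * π i) * S i =
        (ψ i * S i) * π i - piMean n π ψ * (S i * π i) := by intro i; ring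
    rw [Finset.sum_congr rfl (fun i _ => this i), Finset.sum_sub_distrib, ← Finset.mul_sum]
    rfl
  obtain ⟨m, rfl⟩ : ∃ m, n = m + 1 := ⟨n - 1, by omega⟩
  have hzero : ∑ i ∈ Finset.Icc 1 (m + 1), (ψ i - piMean (m + 1) π ψ) * π i = 0 := by
    simp_rw [sub_mul]
    rw [Finset.sum_sub_distrib, ← Finset.mul_sum, hπ1]
    simp [piMean]
  rw [hsum, parts3, hzero, zero_mul, zero_sub, ← Finset.sum_neg_distrib] at hcov
  refine (mul_le_mul_of_nonneg_left hcov hlam.le).trans ?_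
  rw [Finset.mul_sum]
  unfold EForm
  rw [Nat.add_sub_cancel]
  apply Finset.sum_le_sum
  intro k hk
  have hk := Finset.mem_Icc.1 hk
  have hd := hg k hk.1 (by omega)
  have hS : S (k + 1) - S k = (f (k + 1) - f k) ^ 2 / (ψ (k + 1) - ψ k) := by
    rw [hSdef]; unfold accS; rw [Finset.sum_range_succ]; ring
  have hI : - (lam * ∑ j ∈ Finset.Icc 1 k, (ψ j - piMean (m + 1) π ψ) * π j) ≤
      (ψ (k + 1) - ψ k) * ν k := by
    refine le_trans ?_ (hge k (by omega))
    have hq : ∑ j ∈ Finset.Icc 1 k, ψ j * π j ≤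
        ∑ j ∈ Finset.Icc 1 k, (ψ j - piMean (m + 1) π ψ) * π j := by
      apply Finset.sum_le_sum
      intro j hj
      have hj := Finset.mem_Icc.1 hj
      apply mul_le_mul_of_nonneg_right _ (hπ j (Finset.mem_Icc.2 ⟨hj.1, by omega⟩)).le
      linarith
    have := mul_le_mul_of_nonneg_left hq hlam.le
    linarith
  have hq : 0 ≤ (f (k + 1) - f k) ^ 2 / (ψ (k + 1) - ψ k) := by positivity
  rw [hS]
  calc _ = (- (lam * ∑ j ∈ Finset.Icc 1 k, (ψ j - piMean (m + 1) π ψ) * π j)) *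
        ((f (k + 1) - f k) ^ 2 / (ψ (k + 1) - ψ k)) := by ring
    _ ≤ ((ψ (k + 1) - ψ k) * ν k) * ((f (k + 1) - f k) ^ 2 / (ψ (k + 1) - ψ k)) :=
        mul_le_mul_of_nonneg_right hI hq
    _ = _ := by field_simp; ring

theorem stmt3 (n : ℕ) (hn : 2 ≤ n) (π ν : ℕ → ℝ)
    (hπ : ∀ i ∈ Finset.Icc 1 n, 0 < π i)
    (hπ1 : ∑ i ∈ Finset.Icc 1 n, π i = 1)
    (hν : ∀ i ∈ Finset.Icc 1 (n - 1), 0 < ν i)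
    (hν0 : ν 0 = 0) (hνn : ν n = 0)
    (gap : ℝ) (hgap : IsSpectralGap n π ν gap)
    (a : ℝ) (ha : 0 < a)
    (L U : ℕ → ℝ) (hL0 : 0 < L 0) (hLgap : L 0 < gap) (hgapU : gap < U 0)
    (ψ : ℕ → ℕ → ℝ)
    (hψ1 : ∀ k, ψ k 1 = -a)
    (hrec : ∀ k, PosPartRec n π ν ((L k + U k) / 2) (ψ k))
    (hupd : ∀ k,
      (0 < piMean n π (ψ k) → L (k + 1) = L k ∧ U (k + 1) = (L k + U k) / 2) ∧
      (piMean n π (ψ k) < 0 → L (k + 1) = (L k + U k) / 2 ∧ U (k + 1) = U k) ∧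
      (piMean n π (ψ k) = 0 →
        L (k + 1) = (L k + U k) / 2 ∧ U (k + 1) = (L k + U k) / 2)) :
    ∀ k, 0 ≤ max (U k - gap) (gap - L k) ∧
      max (U k - gap) (gap - L k) ≤ (U 0 - L 0) / 2 ^ k := by
  have inv : ∀ k, 0 < L k ∧ L k ≤ gap ∧ gap ≤ U k ∧ U k - L k ≤ (U 0 - L 0) / 2 ^ k := by
    intro k
    induction k with
    | zero => exact ⟨hL0, hLgap.le, hgapU.le, by simp⟩
    | succ k ih =>
      obtain ⟨i1, i2, i3, i4⟩ := ih
      have hlam : 0 < (L k + U k) / 2 := by linarith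
      have hhalf : (U 0 - L 0) / 2 ^ (k + 1) = ((U 0 - L 0) / 2 ^ k) / 2 := by
        rw [pow_succ]; field_simp
      have A := gap_le n hn π ν hπ hπ1 hν hν0 hνn gap hgap a ha _ hlam (ψ k) (hψ1 k) (hrec k)
      have B := le_gap n hn π ν hπ hπ1 hν hν0 gap hgap a ha _ hlam (ψ k) (hψ1 k) (hrec k)
      obtain ⟨u1, u2, u3⟩ := hupd k
      rw [hhalf]
      rcases lt_trichotomy (piMean n π (ψ k)) 0 with h | h | h
      · obtain ⟨e1, e2⟩ := u2 h
        have := B h.le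
        rw [e1, e2]
        exact ⟨hlam, this, i3, by linarith⟩
      · obtain ⟨e1, e2⟩ := u3 h
        have b := B h.le
        have c := A h.ge
        rw [e1, e2]
        exact ⟨hlam, b, c, by linarith⟩
      · obtain ⟨e1, e2⟩ := u1 h
        have := A h.le
        rw [e1, e2]
        exact ⟨i1, i2, this, by linarith⟩
  intro k
  obtain ⟨i1, i2, i3, i4⟩ := inv k
  exact ⟨le_max_of_le_left (by linarith), max_le (by linarith) (by linarith)⟩
end

section
/- Assume n ≥ 3. For λ > 0 let φ_λ be the function on V with φ_λ(1) = −1 satisfying the positive-part recursion with parameter λ. Then (λ − λ^G_{π,ν}) · π(φ_λ) > 0 for every λ > 0 with λ ≠ λ^G_{π,ν}. -/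
open Finset

lemma aux_cov (s : Finset ℕ) (π a b : ℕ → ℝ) (h1 : ∑ i ∈ s, π i = 1) :
    ∑ i ∈ s, ∑ j ∈ s, π i * π j * ((a i - a j) * (b i - b j)) =
      2 * (∑ i ∈ s, a i * b i * π i - (∑ i ∈ s, a i * π i) * ∑ i ∈ s, b i * π i) := by
  have e : ∀ i ∈ s, ∑ j ∈ s, π i * π j * ((a i - a j) * (b i - b j)) =
      a i * b i * π i - a i * π i * (∑ j ∈ s, b j * π j) - b i * π i * (∑ j ∈ s, a j * π j)
        + π i * ∑ j ∈ s, a j * b j * π j := by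
    intro i _
    have : ∀ j ∈ s, π i * π j * ((a i - a j) * (b i - b j)) =
      a i * b i * π i * π j - a i * π i * (b j * π j) - b i * π i * (a j * π j)
        + π i * (a j * b j * π j) := fun j _ => by ring
    rw [Finset.sum_congr rfl this, Finset.sum_add_distrib, Finset.sum_sub_distrib,
      Finset.sum_sub_distrib, ← Finset.mul_sum, ← Finset.mul_sum, ← Finset.mul_sum,
      ← Finset.mul_sum, h1, mul_one]
  rw [Finset.sum_congr rfl e, Finset.sum_add_distrib, Finset.sum_sub_distrib,
      Finset.sum_sub_distrib, ← Finset.sum_mul, ← Finset.sum_mul, ← Finset.sum_mul, h1]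
  ring

lemma aux_var_pos (n : ℕ) (π : ℕ → ℝ) (f : ℕ → ℝ)
    (hπ : ∀ i ∈ Finset.Icc 1 n, 0 < π i) (hπ1 : ∑ i ∈ Finset.Icc 1 n, π i = 1)
    (hf : Nonconstant n f) : 0 < varPi n π f := by
  obtain ⟨i, hi, j, hj, hij⟩ := hf
  have h := aux_cov _ π f f hπ1
  have nn : ∀ i ∈ Finset.Icc 1 n, ∀ j ∈ Finset.Icc 1 n,
      0 ≤ π i * π j * ((f i - f j) * (f i - f j)) := fun i hi j hj =>
    mul_nonneg (mul_pos (hπ i hi) (hπ j hj)).le (mul_self_nonneg _)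
  have : 0 < ∑ i ∈ Finset.Icc 1 n, ∑ j ∈ Finset.Icc 1 n,
      π i * π j * ((f i - f j) * (f i - f j)) := by
    apply Finset.sum_pos' (fun i hi => Finset.sum_nonneg (nn i hi))
    refine ⟨i, hi, Finset.sum_pos' (nn i hi) ⟨j, hj, ?_⟩⟩
    exact mul_pos (mul_pos (hπ i hi) (hπ j hj)) (mul_self_pos.2 (sub_ne_zero.2 hij))
  unfold varPi piMean
  simp only [pow_two]
  linarith

lemma aux_cs (a p h D s : ℝ) (hs : 0 < s) (hp : 0 ≤ p) (hh : 0 ≤ h) (H : a ^ 2 ≤ p * h) :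
    (a + D) ^ 2 ≤ (p + s) * (h + D ^ 2 / s) := by
  have hk : 0 ≤ s * h + p * (D ^ 2 / s) := by positivity
  have e : s * (D ^ 2 / s) = D ^ 2 := by field_simp
  have : 2 * (a * D) ≤ s * h + p * (D ^ 2 / s) := by
    apply le_of_sq_le_sq _ hk
    have h1 : (2 * (a * D)) ^ 2 ≤ 4 * (p * h) * D ^ 2 := by nlinarith [sq_nonneg D]
    have h2 : 4 * (p * h) * D ^ 2 = 4 * (s * h) * (p * (D ^ 2 / s)) := by
      nth_rewrite 1 [← e]; ring
    nlinarith [sq_nonneg (s * h - p * (D ^ 2 / s))]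
  nlinarith

theorem stmt6 (n : ℕ) (hn : 3 ≤ n) (π ν : ℕ → ℝ)
    (hπ : ∀ i ∈ Finset.Icc 1 n, 0 < π i)
    (hπ1 : ∑ i ∈ Finset.Icc 1 n, π i = 1)
    (hν : ∀ i ∈ Finset.Icc 1 (n - 1), 0 < ν i)
    (hν0 : ν 0 = 0) (hνn : ν n = 0)
    (gap : ℝ) (hgap : IsSpectralGap n π ν gap) :
    ∀ lam : ℝ, 0 < lam →
      ∀ φ : ℕ → ℝ, φ 1 = -1 → PosPartRec n π ν lam φ →
        lam ≠ gap → 0 < (lam - gap) * piMean n π φ := by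
  intro lam hlam φ hφ1 hrec hne
  have hπ' : ∀ i, 1 ≤ i → i ≤ n → 0 < π i := fun i h1 h2 => hπ i (Finset.mem_Icc.2 ⟨h1, h2⟩)
  have hν' : ∀ i, 1 ≤ i → i < n → 0 < ν i := fun i h1 h2 =>
    hν i (Finset.mem_Icc.2 ⟨h1, by omega⟩)
  obtain ⟨F, hF⟩ : ∃ F : ℕ → ℝ, ∀ m, F m = (φ (m + 1) - φ m) * ν m := ⟨_, fun _ => rfl⟩
  obtain ⟨S, hS⟩ : ∃ S : ℕ → ℝ, ∀ m, S m = ∑ i ∈ Finset.Icc 1 m, φ i * π i := ⟨_, fun _ => rfl⟩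
  have hF0 : F 0 = 0 := by rw [hF, hν0, mul_zero]
  have hS0 : S 0 = 0 := by simp [hS]
  have hSs : ∀ m, S (m + 1) = S m + φ (m + 1) * π (m + 1) := fun m => by
    rw [hS, hS, Finset.sum_Icc_succ_top (by omega)]
  have hFr : ∀ m, m + 1 < n → F (m + 1) = max (F m - lam * (π (m + 1) * φ (m + 1))) 0 := by
    intro m hm
    have h := hrec (m + 1) (by omega) hm
    have hv := hν' (m + 1) (by omega) hm
    simp only [Nat.add_sub_cancel] at h
    rw [hF, hF, h, add_sub_cancel_left, div_mul_cancel₀ _ hv.ne']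
  have hFnn : ∀ m, m < n → 0 ≤ F m := by
    intro m hm
    cases m with
    | zero => rw [hF0]
    | succ m => rw [hFr m hm]; exact le_max_right _ _
  have hstep : ∀ m, 1 ≤ m → m < n → φ m ≤ φ (m + 1) := by
    intro m h1 h2
    have := hFnn m h2
    rw [hF] at this
    have := nonneg_of_mul_nonneg_left this (hν' m h1 h2)
    linarith
  have hmono : ∀ i, 1 ≤ i → ∀ j, i ≤ j → j ≤ n → φ i ≤ φ j := by
    intro i hi j hij
    induction j, hij using Nat.le_induction with
    | base => intro _; exact le_rfl
    | succ j hij ih => intro hj; exact (ih (by omega)).trans (hstep j (by omega) (by omega))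
  have hM : piMean n π φ = S n := by rw [hS]; rfl
  have h12 : φ 1 < φ 2 := by
    have h := hFr 0 (by omega)
    have hp := hπ' 1 le_rfl (by omega)
    have hv := hν' 1 le_rfl (by omega)
    rw [hF0, hφ1] at h
    have : 0 < F 1 := by rw [h]; apply lt_max_of_lt_left; nlinarith
    rw [hF] at this
    have := pos_of_mul_pos_left this hv.le
    linarith
  rw [hM]
  rcases lt_or_gt_of_ne hne with hlt | hgt
  · -- lam < gap
    by_contra hcon
    have hMn : 0 ≤ S n := by
      by_contra hc
      apply hcon
      nlinarith
    have hdich : ∀ m, m < n → F m = - lam * S m ∨ (1 ≤ m ∧ F m = 0 ∧ 0 < φ m) := by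
      intro m
      induction m with
      | zero => intro _; left; rw [hF0, hS0, mul_zero]
      | succ m ih =>
        intro hm
        have hp := hπ' (m + 1) (by omega) (by omega)
        rcases ih (by omega) with h | ⟨h1, h2, h3⟩
        · rcases le_or_gt 0 (F m - lam * (π (m + 1) * φ (m + 1))) with h0 | h0
          · left
            rw [hFr m hm, max_eq_left h0, hSs, h]; ring
          · right
            refine ⟨by omega, by rw [hFr m hm, max_eq_right h0.le], ?_⟩
            have := hFnn m (by omega)
            have : 0 < lam * π (m + 1) * φ (m + 1) := by linarith
            exact pos_of_mul_pos_right this (mul_pos hlam hp).le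
        · right
          have h4 := hstep m h1 (by omega)
          refine ⟨by omega, ?_, by linarith⟩
          rw [hFr m hm, h2, max_eq_right]
          have : 0 < φ (m + 1) := by linarith
          have : 0 < lam * (π (m + 1) * φ (m + 1)) := by positivity
          linarith
    have hE : ∀ m, m + 1 ≤ n → ∑ i ∈ Finset.Icc 1 m, (φ i - φ (i + 1)) * (φ i - φ (i + 1)) * ν i
        = lam * (∑ i ∈ Finset.Icc 1 (m + 1), φ i ^ 2 * π i - φ (m + 1) * S (m + 1)) := by
      intro m
      induction m with
      | zero => intro _; simp [hS]; right; ring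
      | succ m ih =>
        intro hm
        rw [Finset.sum_Icc_succ_top (by omega), ih (by omega),
          Finset.sum_Icc_succ_top (b := m + 1) (by omega), hSs (m + 1)]
        have key : (φ (m + 1 + 1) - φ (m + 1)) * (F (m + 1) + lam * S (m + 1)) = 0 := by
          rcases hdich (m + 1) (by omega) with h | ⟨_, h, _⟩
          · rw [h]; ring
          · have hv := hν' (m + 1) (by omega) (by omega)
            rw [hF] at h
            rcases mul_eq_zero.1 h with h | h
            · rw [h, zero_mul]
            · exact absurd h hv.ne'
        rw [hF] at key
        linear_combination key
    have hnc : Nonconstant n φ := ⟨1, Finset.mem_Icc.2 ⟨le_rfl, by omega⟩, 2,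
      Finset.mem_Icc.2 ⟨by omega, by omega⟩, h12.ne⟩
    have hV := aux_var_pos n π φ hπ hπ1 hnc
    have hle := hgap.2 ⟨φ, hnc, rfl⟩
    rw [le_div_iff₀ hV] at hle
    have hEn := hE (n - 1) (by omega)
    rw [show n - 1 + 1 = n by omega] at hEn
    have hEF : EForm n ν φ φ = lam * (∑ i ∈ Finset.Icc 1 n, φ i ^ 2 * π i - φ n * S n) := hEn
    have hVF : varPi n π φ = ∑ i ∈ Finset.Icc 1 n, φ i ^ 2 * π i - S n ^ 2 := by
      rw [hS]; rfl
    have hSn : S n ≤ φ n := by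
      rw [hS]
      calc _ ≤ ∑ i ∈ Finset.Icc 1 n, φ n * π i := by
            apply Finset.sum_le_sum
            intro i hi
            exact mul_le_mul_of_nonneg_right
              (hmono i (Finset.mem_Icc.1 hi).1 n (Finset.mem_Icc.1 hi).2 le_rfl) (hπ i hi).le
        _ = φ n := by rw [← Finset.mul_sum, hπ1, mul_one]
    have h1 : EForm n ν φ φ ≤ lam * varPi n π φ := by
      rw [hEF, hVF]
      apply mul_le_mul_of_nonneg_left _ hlam.le
      nlinarith
    nlinarith
  · -- gap < lam
    by_contra hcon
    have hMn : S n ≤ 0 := by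
      by_contra hc
      apply hcon
      exact mul_pos (by linarith) (by linarith)
    have hFS : ∀ m, m < n → - lam * S m ≤ F m := by
      intro m
      induction m with
      | zero => intro _; rw [hF0, hS0, mul_zero]
      | succ m ih =>
        intro hm
        have := ih (by omega)
        rw [hFr m hm, hSs]
        apply le_max_of_le_left
        linarith
    have hSneg : ∀ m, 1 ≤ m → m < n → S m < 0 := by
      intro m h1 h2
      by_contra hc
      push Not at hc
      have hpos : 0 < φ m := by
        by_contra hc2
        push Not at hc2
        have : ∀ k, 1 ≤ k → k ≤ m → S k < 0 := by
          intro k hk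
          induction k, hk using Nat.le_induction with
          | base =>
            intro _
            rw [hSs 0, hS0, zero_add, hφ1]
            have := hπ' 1 le_rfl (by omega)
            linarith
          | succ k hk ih =>
            intro hkm
            have h3 := ih (by omega)
            have h4 := hmono (k + 1) (by omega) m hkm (by omega)
            have h5 := hπ' (k + 1) (by omega) (by omega)
            rw [hSs]
            nlinarith
        linarith [this m h1 le_rfl]
      have : ∀ k, m + 1 ≤ k → k ≤ n → 0 < S k := by
        intro k hk
        induction k, hk using Nat.le_induction with
        | base =>
          intro hmn
          have h4 := hstep m h1 h2
          have h5 := hπ' (m + 1) (by omega) (by omega)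
          rw [hSs]
          nlinarith
        | succ k hk ih =>
          intro hkn
          have h3 := ih (by omega)
          have h4 := hmono m h1 (k + 1) (by omega) (by omega)
          have h5 := hπ' (k + 1) (by omega) (by omega)
          rw [hSs]
          nlinarith
      linarith [this n (by omega) le_rfl]
    have hsp : ∀ m, 1 ≤ m → m < n → 0 < φ (m + 1) - φ m := by
      intro m h1 h2
      have h3 := hSneg m h1 h2
      have h4 := hFS m h2
      have : 0 < F m := by nlinarith
      rw [hF] at this
      exact pos_of_mul_pos_left this (hν' m h1 h2).le
    obtain ⟨f, hf, hgf⟩ := hgap.1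
    have hV := aux_var_pos n π f hπ hπ1 hf
    obtain ⟨H, hH⟩ : ∃ H : ℕ → ℝ, ∀ m, H m = ∑ k ∈ Finset.Ico 1 m,
      (f (k + 1) - f k) ^ 2 / (φ (k + 1) - φ k) := ⟨_, fun _ => rfl⟩
    have hHs : ∀ m, 1 ≤ m → H (m + 1) = H m + (f (m + 1) - f m) ^ 2 / (φ (m + 1) - φ m) := by
      intro m hm
      rw [hH, hH, Finset.sum_Ico_succ_top hm]
    have hH1 : H 1 = 0 := by simp [hH]
    have hHmono : ∀ i, 1 ≤ i → ∀ j, i ≤ j → j ≤ n → H i ≤ H j := by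
      intro i hi j hij
      induction j, hij using Nat.le_induction with
      | base => intro _; exact le_rfl
      | succ j hij ih =>
        intro hj
        have h1 := ih (by omega)
        have h2 := hsp j (by omega) (by omega)
        have : 0 ≤ (f (j + 1) - f j) ^ 2 / (φ (j + 1) - φ j) := by positivity
        rw [hHs j (by omega)]
        linarith
    have hcs : ∀ i, 1 ≤ i → ∀ j, i ≤ j → j ≤ n →
        (f j - f i) ^ 2 ≤ (φ j - φ i) * (H j - H i) := by
      intro i hi j hij
      induction j, hij using Nat.le_induction with
      | base => intro _; simp
      | succ j hij ih =>
        intro hj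
        have h := aux_cs (f j - f i) (φ j - φ i) (H j - H i) (f (j + 1) - f j)
          (φ (j + 1) - φ j) (hsp j (by omega) (by omega))
          (by linarith [hmono i hi j hij (by omega)]) (by linarith [hHmono i hi j hij (by omega)])
          (ih (by omega))
        rw [hHs j (by omega)]
        convert h using 1 <;> ring
    have hcov1 := aux_cov _ π f f hπ1
    have hcov2 := aux_cov _ π φ H hπ1
    have hcmp : ∑ i ∈ Finset.Icc 1 n, ∑ j ∈ Finset.Icc 1 n,
          π i * π j * ((f i - f j) * (f i - f j)) ≤
        ∑ i ∈ Finset.Icc 1 n, ∑ j ∈ Finset.Icc 1 n,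
          π i * π j * ((φ i - φ j) * (H i - H j)) := by
      apply Finset.sum_le_sum
      intro i hi
      apply Finset.sum_le_sum
      intro j hj
      apply mul_le_mul_of_nonneg_left _ (mul_pos (hπ i hi) (hπ j hj)).le
      rw [Finset.mem_Icc] at hi hj
      rcases le_total i j with h | h
      · have := hcs i hi.1 j h hj.2
        linarith
      · have := hcs j hj.1 i h hi.2
        linarith
    have hVle : varPi n π f ≤ ∑ i ∈ Finset.Icc 1 n, φ i * H i * π i
        - S n * ∑ i ∈ Finset.Icc 1 n, H i * π i := by
      unfold varPi piMean
      rw [hS]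
      simp only [pow_two]
      linarith
    have hparts : ∀ m, m + 1 ≤ n → lam * ∑ i ∈ Finset.Icc 1 (m + 1), φ i * H i * π i ≤
        lam * (S (m + 1) * H (m + 1)) +
          ∑ i ∈ Finset.Icc 1 m, (f i - f (i + 1)) * (f i - f (i + 1)) * ν i := by
      intro m
      induction m with
      | zero => intro _; simp [hH1]
      | succ m ih =>
        intro hm
        have h1 := ih (by omega)
        have h2 := hsp (m + 1) (by omega) (by omega)
        have h3 := hFS (m + 1) (by omega)
        rw [hF] at h3
        rw [Finset.sum_Icc_succ_top (by omega), Finset.sum_Icc_succ_top (b := m)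
            (f := fun i => (f i - f (i + 1)) * (f i - f (i + 1)) * ν i) (by omega),
          hSs (m + 1), hHs (m + 1) (by omega)]
        set s := φ (m + 1 + 1) - φ (m + 1) with hs
        set D := f (m + 1 + 1) - f (m + 1) with hD
        have h4 : 0 ≤ D ^ 2 / s := by positivity
        have h5 : s * (D ^ 2 / s) = D ^ 2 := by field_simp
        have h6 : -lam * S (m + 1) * (D ^ 2 / s) ≤ D ^ 2 * ν (m + 1) := by
          calc _ ≤ s * ν (m + 1) * (D ^ 2 / s) := mul_le_mul_of_nonneg_right h3 h4
            _ = s * (D ^ 2 / s) * ν (m + 1) := by ring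
            _ = _ := by rw [h5]
        have h7 : (f (m + 1) - f (m + 1 + 1)) * (f (m + 1) - f (m + 1 + 1)) * ν (m + 1)
          = D ^ 2 * ν (m + 1) := by rw [hD]; ring
        rw [h7]
        linarith
    have hEn := hparts (n - 1) (by omega)
    rw [show n - 1 + 1 = n by omega] at hEn
    change _ ≤ _ + EForm n ν f f at hEn
    have hHn : ∑ i ∈ Finset.Icc 1 n, H i * π i ≤ H n := by
      calc _ ≤ ∑ i ∈ Finset.Icc 1 n, H n * π i := by
            apply Finset.sum_le_sum
            intro i hi
            exact mul_le_mul_of_nonneg_right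
              (hHmono i (Finset.mem_Icc.1 hi).1 n (Finset.mem_Icc.1 hi).2 le_rfl) (hπ i hi).le
        _ = H n := by rw [← Finset.mul_sum, hπ1, mul_one]
    have hfin : lam * varPi n π f ≤ EForm n ν f f := by
      have h1 := mul_le_mul_of_nonneg_left hVle hlam.le
      have h2 := mul_le_mul_of_nonneg_left (mul_le_mul_of_nonpos_left hHn hMn) hlam.le
      linarith
    have : lam ≤ gap := by rw [hgf, le_div_iff₀ hV]; exact hfin
    linarith
end
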